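/- arXiv:math/0308086 — 3 statements merged into one kernel-verified Lean document; each statement's English description precedes it below -/
import Mathlib

section
/- For every real z > 0, 2 ∫₀^∞ arctan(x/z)/(e^{2πx} + 1) dx = z·log z − z + (1/2)·log(2π) − log Γ(z + 1/2). -/
open Real MeasureTheory Filter

/-- Hurwitz zeta function ζ(s, a) for real a > 0, via analytic continuation. -/
noncomputable def hurwitzZetaReal (s : ℂ) (a : ℝ) : ℂ :=
  HurwitzZeta.hurwitzZeta (a : UnitAddCircle) s -
    ∑ k ∈ Finset.range (⌈a⌉₊ - 1), ((a - (⌈a⌉₊ - 1) + k : ℝ) : ℂ) ^ (-s)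

/-- ζ'(-1, a): derivative of the Hurwitz zeta function w.r.t. s at s = -1. -/
noncomputable def hurwitzZetaDerivNegOne (a : ℝ) : ℂ :=
  deriv (fun s => hurwitzZetaReal s a) (-1)

/-- Logarithm of the Glaisher–Kinkelin constant: log A = 1/12 - ζ'(-1). -/
noncomputable def logA : ℂ := 1 / 12 - deriv riemannZeta (-1)

/-- log G(z+1) for z > 0, via log G(z+1) = z log Γ(z) + ζ'(-1) - ζ'(-1, z). -/
noncomputable def logBarnesG1p (z : ℝ) : ℂ :=
  z * Real.log (Real.Gamma z) + deriv riemannZeta (-1) - hurwitzZetaDerivNegOne z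

/-- log G(x) for x > 0, via the recurrence G(z+1) = Γ(z) G(z) on (0, 1]. -/
noncomputable def logBarnesG (x : ℝ) : ℂ :=
  if x ≤ 1 then logBarnesG1p x - Real.log (Real.Gamma x) else logBarnesG1p (x - 1)

/-- The Barnes G-function (for positive real argument). -/
noncomputable def barnesG (x : ℝ) : ℂ := Complex.exp (logBarnesG x)

/-- The digamma function ψ = (log Γ)'. -/
noncomputable def digamma (x : ℝ) : ℝ := deriv (fun t => Real.log (Real.Gamma t)) x

/-- The trigamma function ψ⁽¹⁾ = (log Γ)''. -/
noncomputable def trigamma (x : ℝ) : ℝ :=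
  deriv (deriv (fun t => Real.log (Real.Gamma t))) x

/-- The Clausen function Cl₂(x) = ∑_{k ≥ 1} sin(k x) / k². -/
noncomputable def clausen2 (x : ℝ) : ℝ := ∑' k : ℕ, Real.sin ((k + 1) * x) / (k + 1) ^ 2

/-- Catalan's constant. -/
noncomputable def catalanConst : ℝ := ∑' k : ℕ, (-1 : ℝ) ^ k / (2 * (k : ℝ) + 1) ^ 2

/-!
With `q = exp (2 * π * x)`, the identity `1 / (q + 1) = 1 / (q - 1) - 2 / (q ^ 2 - 1)` turns the
integral into `B z - B (2 * z)`, where `B z = 2 ∫₀^∞ arctan (x / z) / (exp (2 * π * x) - 1) dx`.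
Binet's second formula says that `B` is the error `R` of Stirling's approximation to `log Γ`, and
Legendre's duplication formula evaluates `R z - R (2 * z)`.

For Binet's formula, `x / (z ^ 2 + x ^ 2) = ∫₀^∞ exp (-z * t) * sin (t * x) dt` and Fubini express
`-B'` as the Laplace transform of `2 ∫₀^∞ sin (t * x) / (exp (2 * π * x) - 1) dx`, which the partial
fractions of `coth` identify as `1 / (exp t - 1) - 1 / t + 1 / 2`. The factor `exp t - 1` cancels
from `B' z - B' (z + 1)`, leaving a Frullani integral. Hence `B` and `R` have the same unit-step
differences; both vanish along `z + n`, so they coincide.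
-/

section

open Set Topology

variable {a b t x y z : ℝ}

theorem abs_arctan_le_abs (x : ℝ) : |arctan x| ≤ |x| := by
  have le_self {y : ℝ} (hy : 0 ≤ y) : arctan y ≤ y := by
    simpa only [tan_arctan] using le_tan (arctan_nonneg.2 hy) (arctan_lt_pi_div_two y)
  rcases le_total 0 x with hx | hx
  · rw [abs_of_nonneg (arctan_nonneg.2 hx), abs_of_nonneg hx]
    exact le_self hx
  · rw [← abs_neg, ← arctan_neg, ← abs_neg x, abs_of_nonneg (neg_nonneg.2 hx),
      abs_of_nonneg (arctan_nonneg.2 (neg_nonneg.2 hx))]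
    exact le_self (neg_nonneg.2 hx)

theorem integrableOn_exp_neg_mul (ha : 0 < a) :
    IntegrableOn (fun t ↦ exp (-a * t)) (Ioi 0) :=
  integrableOn_exp_mul_Ioi (neg_neg_of_pos ha) 0

theorem integral_exp_neg_mul (ha : 0 < a) : ∫ t in Ioi 0, exp (-a * t) = a⁻¹ := by
  rw [integral_exp_mul_Ioi (neg_neg_of_pos ha), mul_zero, exp_zero, neg_div_neg_eq, one_div]

theorem integral_exp_neg_mul_mul_sin (ha : 0 < a) (t : ℝ) :
    ∫ x in Ioi 0, exp (-a * x) * sin (t * x) = t / (a ^ 2 + t ^ 2) := by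
  have hre : (-a + t * Complex.I : ℂ).re < 0 := by simpa using ha
  have him (x : ℝ) : exp (-a * x) * sin (t * x) =
      RCLike.im (Complex.exp ((-a + t * Complex.I) * x)) := by
    simp [Complex.exp_im]
  simp_rw [him]
  rw [integral_im (integrableOn_exp_mul_complex_Ioi hre 0), integral_exp_mul_complex_Ioi hre]
  simp [Complex.normSq_apply, ← sq, neg_div]

theorem integrableOn_mul_exp_neg_mul (ha : 0 < a) :
    IntegrableOn (fun x ↦ x * exp (-a * x)) (Ioi 0) := by
  simpa using integrableOn_rpow_mul_exp_neg_mul_rpow (s := 1) (p := 1)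
    (by norm_num) one_pos ha

theorem integral_mul_exp_neg_mul (ha : 0 < a) :
    ∫ x in Ioi 0, x * exp (-a * x) = 1 / a ^ 2 := by
  have h := Real.integral_rpow_mul_exp_neg_mul_Ioi two_pos ha
  norm_num at h
  simpa using h

theorem integrableOn_exp_neg_mul_mul_sin (ha : 0 < a) (t : ℝ) :
    IntegrableOn (fun x ↦ exp (-a * x) * sin (t * x)) (Ioi 0) := by
  refine (integrableOn_exp_neg_mul ha).mul_bdd (c := 1)
    (by fun_prop) (ae_of_all _ fun x ↦ abs_sin_le_one _)

theorem integral_norm_exp_neg_mul_mul_sin_le (ha : 0 < a) (t : ℝ) :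
    ∫ x in Ioi 0, ‖exp (-a * x) * sin (t * x)‖ ≤ |t| * (1 / a ^ 2) := by
  rw [← integral_mul_exp_neg_mul ha, ← integral_const_mul]
  refine setIntegral_mono_on (integrableOn_exp_neg_mul_mul_sin ha t).norm
    ((integrableOn_mul_exp_neg_mul ha).const_mul _) measurableSet_Ioi fun x (hx : 0 < x) ↦ ?_
  rw [norm_mul, norm_eq_abs, norm_eq_abs, abs_exp, ← mul_assoc, mul_comm (exp _)]
  gcongr
  simpa only [abs_mul, abs_of_pos hx] using abs_sin_le_abs (x := t * x)

theorem norm_inv_mul_exp_neg_mul_sub_le (hab : a ≤ b) (ht : 0 < t) :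
    ‖t⁻¹ * (exp (-a * t) - exp (-b * t))‖ ≤ (b - a) * exp (-a * t) := by
  have hfactor : exp (-b * t) = exp (-a * t) * exp (-((b - a) * t)) := by
    rw [← exp_add]
    ring_nf
  have hle : exp (-((b - a) * t)) ≤ 1 :=
    exp_le_one_iff.2 (neg_nonpos.2 (mul_nonneg (sub_nonneg.2 hab) ht.le))
  rw [hfactor, ← mul_one_sub, norm_of_nonneg (by have := sub_nonneg.2 hle; positivity)]
  calc t⁻¹ * (exp (-a * t) * (1 - exp (-((b - a) * t))))
      ≤ t⁻¹ * (exp (-a * t) * ((b - a) * t)) := by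
        gcongr
        linarith [one_sub_le_exp_neg ((b - a) * t)]
    _ = (b - a) * exp (-a * t) := by field_simp

theorem integrableOn_inv_mul_exp_neg_mul_sub (ha : 0 < a) (hb : 0 < b) :
    IntegrableOn (fun t ↦ t⁻¹ * (exp (-a * t) - exp (-b * t))) (Ioi 0) := by
  wlog hab : a ≤ b generalizing a b
  · simpa only [Pi.neg_def, ← mul_neg, neg_sub] using (this hb ha (le_of_not_ge hab)).neg
  refine ((integrableOn_exp_neg_mul ha).const_mul (b - a)).mono' (by fun_prop) ?_
  filter_upwards [ae_restrict_mem measurableSet_Ioi] with t ht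
  exact norm_inv_mul_exp_neg_mul_sub_le hab ht

theorem integral_inv_mul_exp_neg_mul_sub (ha : 0 < a) (hb : 0 < b) :
    ∫ t in Ioi 0, t⁻¹ * (exp (-a * t) - exp (-b * t)) = log b - log a := by
  have hcont : Continuous fun x ↦ exp (-x) := by fun_prop
  have hint := integrableOn_inv_mul_exp_neg_mul_sub ha hb
  simp_rw [neg_mul] at hint ⊢
  rw [← log_div hb.ne' ha.ne']
  simpa only [smul_eq_mul, sub_zero, mul_one] using
    Frullani.integral_Ioi_eq (hcont.locallyIntegrable.locallyIntegrableOn _) ha hb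
      ((hcont.tendsto' 0 1 (by simp)).mono_left nhdsWithin_le_nhds)
      tendsto_exp_neg_atTop_nhds_zero hint

theorem hasSum_exp_neg_mul_natCast_succ (hy : 0 < y) :
    HasSum (fun n : ℕ ↦ exp (-(y * (n + 1)))) (exp y - 1)⁻¹ := by
  have hterm (n : ℕ) : exp (-(y * (n + 1))) = exp (-y) * exp (-y) ^ n := by
    rw [← exp_nat_mul, ← exp_add]
    ring_nf
  have hval : (exp y - 1)⁻¹ = exp (-y) * (1 - exp (-y))⁻¹ := by
    rw [exp_neg, ← mul_inv, mul_sub, mul_inv_cancel₀ (exp_ne_zero y), mul_one]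
  rw [funext hterm, hval]
  have hlt : exp (-y) < 1 := exp_lt_one_iff.2 (neg_neg_of_pos hy)
  exact (hasSum_geometric_of_lt_one (exp_pos _).le hlt).mul_left _

theorem mul_inv_exp_sub_one_le (ha : 0 < a) (hx : 0 < x) :
    x * (exp (a * x) - 1)⁻¹ ≤ a⁻¹ * exp (-(a / 2) * x) := by
  have hsinh : a / 2 * x ≤ sinh (a / 2 * x) := self_le_sinh_iff.2 (by positivity)
  have h : a * x * exp (a / 2 * x) ≤ exp (a * x) - 1 := by
    calc a * x * exp (a / 2 * x) = 2 * (a / 2 * x) * exp (a / 2 * x) := by ring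
      _ ≤ 2 * sinh (a / 2 * x) * exp (a / 2 * x) := by gcongr
      _ = exp (a * x) - 1 := by
        rw [sinh_eq, show a * x = a / 2 * x + a / 2 * x by ring, exp_add, exp_neg]
        field_simp
  calc x * (exp (a * x) - 1)⁻¹ ≤ x * (a * x * exp (a / 2 * x))⁻¹ := by gcongr
    _ = a⁻¹ * exp (-(a / 2) * x) := by
      rw [neg_mul, exp_neg]
      field_simp

theorem integrableOn_mul_inv_exp_sub_one (ha : 0 < a) :
    IntegrableOn (fun x ↦ x * (exp (a * x) - 1)⁻¹) (Ioi 0) := by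
  have hexp : IntegrableOn (fun x ↦ a⁻¹ * exp (-(a / 2) * x)) (Ioi 0) :=
    (integrableOn_exp_neg_mul (half_pos ha)).const_mul _
  refine hexp.mono' (by fun_prop) ?_
  filter_upwards [ae_restrict_mem measurableSet_Ioi] with x (hx : 0 < x)
  have : 0 < exp (a * x) - 1 := sub_pos.2 (one_lt_exp_iff.2 (mul_pos ha hx))
  rw [norm_of_nonneg (by positivity)]
  exact mul_inv_exp_sub_one_le ha hx

theorem hasSum_coth (hy : y ≠ 0) :
    HasSum (fun n : ℕ ↦ 2 * y / (y ^ 2 + (n + 1) ^ 2))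
      (π * (cosh (π * y) / sinh (π * y)) - 1 / y) := by
  have hmem : (y * Complex.I : ℂ) ∈ Complex.integerComplement := by
    rw [Complex.mem_integerComplement_iff]
    rintro ⟨n, hn⟩
    exact hy (by simpa using (congrArg Complex.im hn).symm)
  have hyc : (y : ℂ) ≠ 0 := Complex.ofReal_ne_zero.2 hy
  have hterm (n : ℕ) : ((2 * y / (y ^ 2 + (n + 1) ^ 2) : ℝ) : ℂ) =
      Complex.I * cotTerm (y * Complex.I) n := by
    have hden : (y : ℂ) ^ 2 + (n + 1) ^ 2 ≠ 0 := by
      exact_mod_cast (by positivity : y ^ 2 + ((n : ℝ) + 1) ^ 2 ≠ 0)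
    rw [cotTerm_identity hmem, show (y * Complex.I + (n + 1)) * (y * Complex.I - (n + 1)) =
      -((y : ℂ) ^ 2 + (n + 1) ^ 2) by linear_combination (y : ℂ) ^ 2 * Complex.I_sq]
    push_cast
    field_simp
    linear_combination Complex.I_sq
  have hval : ((π * (cosh (π * y) / sinh (π * y)) - 1 / y : ℝ) : ℂ) =
      Complex.I * (π * Complex.cot (π * (y * Complex.I)) - 1 / (y * Complex.I)) := by
    have hsinh : Complex.sinh (π * y) ≠ 0 := by
      exact_mod_cast sinh_ne_zero.2 (mul_ne_zero pi_ne_zero hy)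
    rw [Complex.cot_eq_cos_div_sin, ← mul_assoc, Complex.cos_mul_I, Complex.sin_mul_I]
    push_cast
    field_simp
  rw [← Complex.hasSum_ofReal, funext hterm, hval, cot_series_rep' hmem]
  exact (summable_cotTerm hmem).hasSum.mul_left Complex.I

section Weighted

-- Every function integrated against `w` vanishes at `0` to first order, so only `x * w x` has to be
-- integrable: `w` may have a pole at `0`, like `(exp (a * x) - 1)⁻¹`.
variable {μ : Measure ℝ} {g w : ℝ → ℝ} {C : ℝ}

theorem aestronglyMeasurable_mul_of_apply_zero
    (hw : AEStronglyMeasurable (fun x ↦ x * w x) μ) (hg : Measurable g) (hg0 : g 0 = 0) :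
    AEStronglyMeasurable (fun x ↦ g x * w x) μ := by
  have hfactor (x : ℝ) : g x * w x = g x / x * (x * w x) := by
    rcases eq_or_ne x 0 with rfl | hx
    · simp [hg0]
    · field_simp
  simp_rw [hfactor]
  exact (by fun_prop : Measurable fun x ↦ g x / x).aestronglyMeasurable.mul hw

theorem abs_mul_le_mul_abs_mul (h : |y| ≤ C * |x|) (v : ℝ) :
    |y * v| ≤ C * |x * v| := by
  rw [abs_mul, abs_mul, ← mul_assoc]
  gcongr

theorem integrable_mul_of_abs_le (hw : Integrable (fun x ↦ x * w x) μ) (hg : Measurable g)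
    (hC : ∀ x, |g x| ≤ C * |x|) : Integrable (fun x ↦ g x * w x) μ := by
  have hg0 : g 0 = 0 := by simpa using hC 0
  exact (hw.norm.const_mul C).mono' (aestronglyMeasurable_mul_of_apply_zero hw.1 hg hg0)
    (ae_of_all _ fun x ↦ abs_mul_le_mul_abs_mul (hC x) (w x))

theorem abs_arctan_div_le (x z : ℝ) : |arctan (x / z)| ≤ |z|⁻¹ * |x| := by
  rw [mul_comm, ← div_eq_mul_inv, ← abs_div]
  exact abs_arctan_le_abs _

theorem integrable_arctan_div_mul (hw : Integrable (fun x ↦ x * w x) μ) (z : ℝ) :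
    Integrable (fun x ↦ arctan (x / z) * w x) μ :=
  integrable_mul_of_abs_le hw (by fun_prop) (abs_arctan_div_le · z)

theorem tendsto_integral_arctan_div_mul (hw : Integrable (fun x ↦ x * w x) μ) :
    Tendsto (fun z ↦ ∫ x, arctan (x / z) * w x ∂μ) atTop (𝓝 0) := by
  rw [← integral_zero ℝ ℝ (μ := μ)]
  refine tendsto_integral_filter_of_dominated_convergence (fun x ↦ |x * w x|)
    (Eventually.of_forall fun z ↦ (integrable_arctan_div_mul hw z).1) ?_ hw.abs
    (ae_of_all _ fun x ↦ ?_)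
  · filter_upwards [eventually_ge_atTop 1] with z hz
    refine ae_of_all _ fun x ↦ (abs_mul_le_mul_abs_mul (abs_arctan_div_le x z) _).trans ?_
    exact mul_le_of_le_one_left (abs_nonneg _) (inv_le_one_of_one_le₀ (hz.trans (le_abs_self z)))
  · have harctan : Tendsto (fun z ↦ arctan (x / z)) atTop (𝓝 0) :=
      (continuous_arctan.tendsto' 0 0 arctan_zero).comp (tendsto_const_nhds.div_atTop tendsto_id)
    simpa using harctan.mul_const (w x)

theorem hasDerivAt_arctan_const_div (x : ℝ) (hz : z ≠ 0) :
    HasDerivAt (fun z ↦ arctan (x / z)) (-(x / (z ^ 2 + x ^ 2))) z := by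
  refine ((hasDerivAt_const z x).fun_div (hasDerivAt_id' z) hz).arctan.congr_deriv ?_
  have hquot : 1 + (x / z) ^ 2 = (z ^ 2 + x ^ 2) / z ^ 2 := by field_simp
  rw [hquot]
  field_simp
  ring

theorem hasDerivAt_integral_arctan_div_mul (hw : Integrable (fun x ↦ x * w x) μ) (hz : z ≠ 0) :
    HasDerivAt (fun z ↦ ∫ x, arctan (x / z) * w x ∂μ) (-∫ x, x / (z ^ 2 + x ^ 2) * w x ∂μ) z := by
  have hz' : 0 < |z| := abs_pos.2 hz
  have hnhds : {y : ℝ | |z| / 2 < |y|} ∈ 𝓝 z :=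
    (isOpen_lt continuous_const continuous_abs).mem_nhds (half_lt_self hz')
  have hbound {y : ℝ} (hy : |z| / 2 < |y|) (x : ℝ) :
      |-(x / (y ^ 2 + x ^ 2))| ≤ ((|z| / 2) ^ 2)⁻¹ * |x| := by
    have hden : (|z| / 2) ^ 2 ≤ y ^ 2 + x ^ 2 := by
      rw [← sq_abs y]
      exact (pow_le_pow_left₀ (half_pos hz').le hy.le 2).trans
        (le_add_of_nonneg_right (sq_nonneg x))
    rw [abs_neg, abs_div, abs_of_nonneg (by positivity : 0 ≤ y ^ 2 + x ^ 2), div_eq_inv_mul]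
    gcongr
  rw [← integral_neg]
  simp_rw [← neg_mul]
  exact (hasDerivAt_integral_of_dominated_loc_of_deriv_le
    (F' := fun y x ↦ -(x / (y ^ 2 + x ^ 2)) * w x) hnhds
    (Eventually.of_forall fun y ↦ (integrable_arctan_div_mul hw y).1)
    (integrable_arctan_div_mul hw z)
    (aestronglyMeasurable_mul_of_apply_zero hw.1 (by fun_prop) (by simp))
    (ae_of_all _ fun x y hy ↦ abs_mul_le_mul_abs_mul (hbound hy x) _) (hw.abs.const_mul _)
    (ae_of_all _ fun x y hy ↦ (hasDerivAt_arctan_const_div x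
      (abs_pos.1 ((half_pos hz').trans hy))).mul_const _)).2

theorem integrable_prod_exp_neg_mul_sin_mul (hw : Integrable (fun x ↦ x * w x) μ) (hz : 0 < z) :
    Integrable (fun p : ℝ × ℝ ↦ exp (-z * p.2) * (sin (p.2 * p.1) * w p.1))
      (μ.prod (volume.restrict (Ioi 0))) := by
  refine (hw.mul_prod (integrableOn_mul_exp_neg_mul hz)).norm.mono' ?_ (ae_of_all _ fun p ↦ ?_)
  · have hfactor (p : ℝ × ℝ) : exp (-z * p.2) * (sin (p.2 * p.1) * w p.1) =
        exp (-z * p.2) * (sin (p.2 * p.1) / p.1) * (p.1 * w p.1) := by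
      rcases eq_or_ne p.1 0 with hx | hx
      · simp [hx]
      · field_simp
    simp_rw [hfactor]
    exact (by fun_prop : Measurable _).aestronglyMeasurable.mul hw.1.comp_fst
  · have hsin : |sin (p.2 * p.1)| ≤ |p.2| * |p.1| := abs_mul p.2 p.1 ▸ abs_sin_le_abs
    calc ‖exp (-z * p.2) * (sin (p.2 * p.1) * w p.1)‖
        = |exp (-z * p.2)| * |sin (p.2 * p.1) * w p.1| := abs_mul _ _
      _ ≤ |exp (-z * p.2)| * (|p.2| * |p.1 * w p.1|) := by
        gcongr
        exact abs_mul_le_mul_abs_mul hsin _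
      _ = ‖p.1 * w p.1 * (p.2 * exp (-z * p.2))‖ := by
        rw [norm_mul, norm_mul p.2]
        simp only [norm_eq_abs]
        ring

variable [SFinite μ]

theorem integrableOn_exp_neg_mul_mul_integral_sin_mul (hw : Integrable (fun x ↦ x * w x) μ)
    (hz : 0 < z) :
    IntegrableOn (fun t ↦ exp (-z * t) * ∫ x, sin (t * x) * w x ∂μ) (Ioi 0) := by
  simpa only [IntegrableOn, integral_const_mul] using
    (integrable_prod_exp_neg_mul_sin_mul hw hz).integral_prod_right

theorem integral_div_sq_add_sq_mul (hw : Integrable (fun x ↦ x * w x) μ) (hz : 0 < z) :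
    ∫ x, x / (z ^ 2 + x ^ 2) * w x ∂μ =
      ∫ t in Ioi 0, exp (-z * t) * ∫ x, sin (t * x) * w x ∂μ := by
  calc ∫ x, x / (z ^ 2 + x ^ 2) * w x ∂μ
      = ∫ x, (∫ t in Ioi 0, exp (-z * t) * (sin (t * x) * w x)) ∂μ := by
        congr with x
        simp_rw [← mul_assoc, integral_mul_const, mul_comm _ x]
        rw [integral_exp_neg_mul_mul_sin hz]
    _ = ∫ t in Ioi 0, (∫ x, exp (-z * t) * (sin (t * x) * w x) ∂μ) :=
        integral_integral_swap (integrable_prod_exp_neg_mul_sin_mul hw hz)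
    _ = ∫ t in Ioi 0, exp (-z * t) * ∫ x, sin (t * x) * w x ∂μ := by
        simp_rw [integral_const_mul]

end Weighted

theorem hasSum_integral_sin_mul_inv_exp_sub_one (ha : 0 < a) (t : ℝ) :
    HasSum (fun n : ℕ ↦ t / ((a * (n + 1)) ^ 2 + t ^ 2))
      (∫ x in Ioi 0, sin (t * x) * (exp (a * x) - 1)⁻¹) := by
  have hpos (n : ℕ) : 0 < a * (n + 1) := by positivity
  have hsummable : Summable fun n : ℕ ↦
      ∫ x in Ioi 0, ‖exp (-(a * (n + 1)) * x) * sin (t * x)‖ := by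
    refine Summable.of_nonneg_of_le (fun n ↦ integral_nonneg fun x ↦ norm_nonneg _)
      (fun n ↦ integral_norm_exp_neg_mul_mul_sin_le (hpos n) t) (Summable.mul_left _ ?_)
    have h := ((summable_nat_add_iff 1).2 (summable_one_div_nat_pow.2 one_lt_two)).mul_left
      (1 / a ^ 2)
    simpa only [mul_pow, Nat.cast_add, Nat.cast_one, one_div_mul_one_div] using h
  have hseries : ∀ x ∈ Ioi (0 : ℝ), sin (t * x) * (exp (a * x) - 1)⁻¹ =
      ∑' n : ℕ, exp (-(a * (n + 1)) * x) * sin (t * x) := by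
    intro x (hx : 0 < x)
    rw [tsum_mul_right, mul_comm, ← (hasSum_exp_neg_mul_natCast_succ (mul_pos ha hx)).tsum_eq]
    ring_nf
  rw [setIntegral_congr_fun measurableSet_Ioi hseries]
  simpa only [integral_exp_neg_mul_mul_sin (hpos _)] using
    hasSum_integral_of_summable_integral_norm
      (fun n ↦ integrableOn_exp_neg_mul_mul_sin (hpos n) t) hsummable

theorem exp_sub_one_ne_zero (ht : t ≠ 0) : exp t - 1 ≠ 0 :=
  sub_ne_zero.2 ((exp_eq_one_iff t).not.2 ht)

theorem cosh_div_sinh_eq (hy : y ≠ 0) : cosh y / sinh y = 2 / (exp (2 * y) - 1) + 1 := by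
  have hsinh : exp y - exp (-y) ≠ 0 := by
    simpa [sinh_eq] using sinh_ne_zero.2 hy
  have hexp : exp (2 * y) - 1 = exp y * (exp y - exp (-y)) := by
    rw [mul_sub, ← exp_add, ← exp_add, ← two_mul, add_neg_cancel, exp_zero]
  have hinv : exp y * exp (-y) = 1 := by rw [← exp_add, add_neg_cancel, exp_zero]
  rw [cosh_eq, sinh_eq, hexp]
  field_simp
  linear_combination 2 * hinv

/-- The kernel `k` of Binet's first formula, `stirlingRemainder z = ∫₀^∞ k t / t * exp (-z * t) dt`.
Here its Laplace transform appears as `-binetIntegral'`. -/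
noncomputable def binetKernel (t : ℝ) : ℝ := 1 / (exp t - 1) - 1 / t + 1 / 2

theorem two_mul_integral_sin_mul_inv_exp_sub_one (ht : t ≠ 0) :
    2 * ∫ x in Ioi 0, sin (t * x) * (exp (2 * π * x) - 1)⁻¹ = binetKernel t := by
  have hcoth := (hasSum_coth (div_ne_zero ht two_pi_pos.ne')).mul_left (1 / (2 * π))
  have hterm (n : ℕ) : 1 / (2 * π) * (2 * (t / (2 * π)) / ((t / (2 * π)) ^ 2 + (n + 1) ^ 2)) =
      2 * (t / ((2 * π * (n + 1)) ^ 2 + t ^ 2)) := by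
    have hden : (t / (2 * π)) ^ 2 + ((n : ℝ) + 1) ^ 2 =
        ((2 * π * (n + 1)) ^ 2 + t ^ 2) / (2 * π) ^ 2 := by
      field_simp
      ring
    rw [hden]
    field_simp
  have hval : 1 / (2 * π) * (π * (cosh (π * (t / (2 * π))) / sinh (π * (t / (2 * π)))) -
      1 / (t / (2 * π))) = binetKernel t := by
    rw [binetKernel, show π * (t / (2 * π)) = t / 2 by field_simp,
      cosh_div_sinh_eq (div_ne_zero ht two_ne_zero), mul_div_cancel₀ t two_ne_zero]
    field_simp
    ring
  rw [funext hterm, hval] at hcoth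
  exact ((hasSum_integral_sin_mul_inv_exp_sub_one two_pi_pos t).mul_left 2).unique hcoth

/-- The integral in Binet's second formula for `log Γ`. -/
noncomputable def binetIntegral (z : ℝ) : ℝ :=
  2 * ∫ x in Ioi 0, arctan (x / z) * (exp (2 * π * x) - 1)⁻¹

theorem tendsto_binetIntegral_atTop : Tendsto binetIntegral atTop (𝓝 0) := by
  rw [← mul_zero 2]
  exact (tendsto_integral_arctan_div_mul (integrableOn_mul_inv_exp_sub_one two_pi_pos)).const_mul 2

theorem eqOn_exp_neg_mul_mul_binetKernel (z : ℝ) :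
    EqOn (fun t ↦ 2 * (exp (-z * t) * ∫ x in Ioi 0, sin (t * x) * (exp (2 * π * x) - 1)⁻¹))
      (fun t ↦ exp (-z * t) * binetKernel t) (Ioi 0) := by
  intro t (ht : 0 < t)
  simp only [← two_mul_integral_sin_mul_inv_exp_sub_one ht.ne']
  ring

theorem integrableOn_exp_neg_mul_mul_binetKernel (hz : 0 < z) :
    IntegrableOn (fun t ↦ exp (-z * t) * binetKernel t) (Ioi 0) := by
  have h := integrableOn_exp_neg_mul_mul_integral_sin_mul
    (integrableOn_mul_inv_exp_sub_one two_pi_pos) hz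
  exact IntegrableOn.congr_fun (h.const_mul 2) (eqOn_exp_neg_mul_mul_binetKernel z)
    measurableSet_Ioi

theorem hasDerivAt_binetIntegral (hz : 0 < z) :
    HasDerivAt binetIntegral (-∫ t in Ioi 0, exp (-z * t) * binetKernel t) z := by
  have hw := integrableOn_mul_inv_exp_sub_one two_pi_pos
  have h := (hasDerivAt_integral_arctan_div_mul hw hz.ne').const_mul 2
  rw [integral_div_sq_add_sq_mul hw hz, mul_neg, ← integral_const_mul,
    setIntegral_congr_fun measurableSet_Ioi (eqOn_exp_neg_mul_mul_binetKernel z)] at h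
  exact h

theorem exp_neg_mul_sub_mul_binetKernel (z : ℝ) (ht : t ≠ 0) :
    exp (-z * t) * binetKernel t - exp (-(z + 1) * t) * binetKernel t =
      (exp (-z * t) + exp (-(z + 1) * t)) / 2 - t⁻¹ * (exp (-z * t) - exp (-(z + 1) * t)) := by
  have hexp : exp (-(z + 1) * t) * exp t = exp (-z * t) := by
    rw [← exp_add]
    ring_nf
  have hden := exp_sub_one_ne_zero ht
  rw [← hexp, binetKernel]
  field_simp
  ring

theorem integral_exp_neg_mul_mul_binetKernel_sub (hz : 0 < z) :
    (∫ t in Ioi 0, exp (-z * t) * binetKernel t) -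
        ∫ t in Ioi 0, exp (-(z + 1) * t) * binetKernel t =
      (z⁻¹ + (z + 1)⁻¹) / 2 - (log (z + 1) - log z) := by
  have hz1 : 0 < z + 1 := by positivity
  have hexp := integrableOn_exp_neg_mul hz
  have hexp1 := integrableOn_exp_neg_mul hz1
  rw [← integral_sub (integrableOn_exp_neg_mul_mul_binetKernel hz)
    (integrableOn_exp_neg_mul_mul_binetKernel hz1), setIntegral_congr_fun measurableSet_Ioi
      fun t ht ↦ exp_neg_mul_sub_mul_binetKernel z (ne_of_gt ht), integral_sub
        (by exact (hexp.add hexp1).div_const 2) (integrableOn_inv_mul_exp_neg_mul_sub hz hz1),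
    integral_div, integral_add hexp hexp1, integral_exp_neg_mul hz, integral_exp_neg_mul hz1,
    integral_inv_mul_exp_neg_mul_sub hz hz1]

theorem tendsto_add_mul_log_add_sub_log (b c : ℝ) :
    Tendsto (fun y ↦ (y + b) * (log (y + c) - log y)) atTop (𝓝 c) := by
  have hmain : Tendsto (fun y ↦ y * (log (y + c) - log y)) atTop (𝓝 c) := by
    refine (tendsto_mul_log_one_add_div_atTop c).congr' ?_
    filter_upwards [eventually_gt_atTop 0, eventually_gt_atTop (-c)] with y hy hyc
    rw [← log_div (by linarith) hy.ne', add_div, div_self hy.ne']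
  simpa only [← add_mul, mul_zero, add_zero] using
    hmain.add ((tendsto_log_comp_add_sub_log c).const_mul b)

theorem eq_of_tendsto_add_nat {E : Type*} [TopologicalSpace E] [T2Space E] {f : ℝ → E} {c : E}
    (hper : ∀ y, x ≤ y → f (y + 1) = f y)
    (hlim : Tendsto (fun n : ℕ ↦ f (x + n)) atTop (𝓝 c)) : f x = c := by
  have hconst (n : ℕ) : f (x + n) = f x := by
    induction n with
    | zero => simp
    | succ n ih =>
      rw [Nat.cast_succ, ← add_assoc, hper _ (le_add_of_nonneg_right n.cast_nonneg), ih]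
  simp_rw [hconst] at hlim
  exact tendsto_const_nhds_iff.1 hlim

theorem hasDerivAt_add_half_mul_log_sub_log (hz : 0 < z) :
    HasDerivAt (fun z ↦ (z + 1 / 2) * (log (z + 1) - log z))
      ((log (z + 1) - log z) - (z⁻¹ + (z + 1)⁻¹) / 2) z := by
  have hz1 : 0 < z + 1 := by positivity
  refine (((hasDerivAt_id' z).add_const (1 / 2)).mul
    (((hasDerivAt_log hz1.ne').comp_add_const z 1).sub (hasDerivAt_log hz.ne'))).congr_deriv ?_
  simp only [Pi.sub_apply]
  field_simp
  ring

theorem binetIntegral_sub_add_one (hz : 0 < z) :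
    binetIntegral z - binetIntegral (z + 1) = (z + 1 / 2) * (log (z + 1) - log z) - 1 := by
  let f (y : ℝ) := binetIntegral y - binetIntegral (y + 1) - (y + 1 / 2) * (log (y + 1) - log y)
  have hderiv (y : ℝ) (hy : 0 < y) : HasDerivAt f 0 y := by
    refine (((hasDerivAt_binetIntegral hy).sub
      ((hasDerivAt_binetIntegral (by positivity : 0 < y + 1)).comp_add_const y 1)).sub
      (hasDerivAt_add_half_mul_log_sub_log hy)).congr_deriv ?_
    linarith [integral_exp_neg_mul_mul_binetKernel_sub hy]
  obtain ⟨c, hc⟩ := isOpen_Ioi.exists_is_const_of_deriv_eq_zero isPreconnected_Ioi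
    (fun y hy ↦ (hderiv y hy).differentiableAt.differentiableWithinAt)
    (fun y hy ↦ (hderiv y hy).deriv)
  have hlim : Tendsto f atTop (𝓝 (0 - 0 - 1)) :=
    (tendsto_binetIntegral_atTop.sub (tendsto_binetIntegral_atTop.comp
      (tendsto_atTop_add_const_right _ 1 tendsto_id))).sub
      (tendsto_add_mul_log_add_sub_log (1 / 2) 1)
  have hconst : Tendsto f atTop (𝓝 c) :=
    tendsto_const_nhds.congr' ((eventually_gt_atTop 0).mono fun y hy ↦ (hc y hy).symm)
  have hfz : f z = 0 - 0 - 1 := (hc z hz).trans (tendsto_nhds_unique hconst hlim)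
  simp only [f] at hfz
  linarith

/-- The error of Stirling's approximation to `log Γ`, which Binet's formulas express as an
integral. -/
noncomputable def stirlingRemainder (z : ℝ) : ℝ :=
  log (Gamma z) - ((z - 1 / 2) * log z - z + log (2 * π) / 2)

theorem stirlingRemainder_sub_add_one (hz : 0 < z) :
    stirlingRemainder z - stirlingRemainder (z + 1) =
      (z + 1 / 2) * (log (z + 1) - log z) - 1 := by
  rw [stirlingRemainder, stirlingRemainder, Gamma_add_one hz.ne',
    log_mul hz.ne' (Gamma_pos_of_pos hz).ne']
  ring

theorem tendsto_log_Gamma_add_nat_add_one (hz : 0 < z) :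
    Tendsto (fun n : ℕ ↦ log (Gamma (z + ↑(n + 1))) - z * log n - log n.factorial)
      atTop (𝓝 0) := by
  have hfeq {y : ℝ} (hy : 0 < y) : (log ∘ Gamma) (y + 1) = (log ∘ Gamma) y + log y := by
    rw [Function.comp_apply, Gamma_add_one hy.ne', log_mul hy.ne' (Gamma_pos_of_pos hy).ne',
      add_comm, Function.comp_apply]
  have hseq (n : ℕ) : log (Gamma (z + ↑(n + 1))) - z * log n - log n.factorial =
      log (Gamma z) - BohrMollerup.logGammaSeq z n := by
    have h := BohrMollerup.f_add_nat_eq hfeq hz (n + 1)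
    simp only [Function.comp_apply] at h
    rw [h, BohrMollerup.logGammaSeq]
    ring
  simp_rw [hseq]
  rw [← sub_self (log (Gamma z))]
  exact (BohrMollerup.tendsto_log_gamma hz).const_sub _

theorem stirlingRemainder_add_nat_add_one (z : ℝ) {n : ℕ} (hn : n ≠ 0) :
    stirlingRemainder (z + ↑(n + 1)) =
      (log (Gamma (z + ↑(n + 1))) - z * log n - log n.factorial) +
        (log (Stirling.stirlingSeq n) - log √π) -
        ((n + (z + 1 / 2)) * (log (n + (z + 1)) - log n) - (z + 1)) := by
  have hn' : (n : ℝ) ≠ 0 := Nat.cast_ne_zero.2 hn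
  rw [stirlingRemainder, Stirling.log_stirlingSeq_formula, log_div hn' (exp_ne_zero 1), log_exp,
    log_sqrt pi_pos.le, log_mul two_ne_zero hn', log_mul two_ne_zero pi_ne_zero,
    show (n : ℝ) + (z + 1) = z + ↑(n + 1) by push_cast; ring]
  push_cast
  ring

theorem tendsto_stirlingRemainder_add_nat (hz : 0 < z) :
    Tendsto (fun n : ℕ ↦ stirlingRemainder (z + n)) atTop (𝓝 0) := by
  have hstirling : Tendsto (fun n ↦ log (Stirling.stirlingSeq n) - log √π) atTop (𝓝 0) := by
    rw [← sub_self (log √π)]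
    exact (Stirling.tendsto_stirlingSeq_sqrt_pi.log (sqrt_pos.2 pi_pos).ne').sub_const _
  have hlog : Tendsto (fun n : ℕ ↦ (n + (z + 1 / 2)) * (log (n + (z + 1)) - log n) - (z + 1))
      atTop (𝓝 0) := by
    rw [← sub_self (z + 1)]
    exact ((tendsto_add_mul_log_add_sub_log _ _).comp tendsto_natCast_atTop_atTop).sub_const _
  refine (tendsto_add_atTop_iff_nat 1).1 (Tendsto.congr' ?_
    (by simpa only [add_zero, sub_zero] using
      ((tendsto_log_Gamma_add_nat_add_one hz).add hstirling).sub hlog))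
  filter_upwards [eventually_ne_atTop 0] with n hn
  exact (stirlingRemainder_add_nat_add_one z hn).symm

theorem binetIntegral_eq_stirlingRemainder (hz : 0 < z) :
    binetIntegral z = stirlingRemainder z := by
  have hper (y : ℝ) (hy : z ≤ y) :
      binetIntegral (y + 1) - stirlingRemainder (y + 1) =
        binetIntegral y - stirlingRemainder y := by
    have hy0 : 0 < y := hz.trans_le hy
    linarith [binetIntegral_sub_add_one hy0, stirlingRemainder_sub_add_one hy0]
  have hlim : Tendsto (fun n : ℕ ↦ binetIntegral (z + n) - stirlingRemainder (z + n)) atTop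
      (𝓝 (0 - 0)) :=
    (tendsto_binetIntegral_atTop.comp
      (tendsto_atTop_add_const_left _ z tendsto_natCast_atTop_atTop)).sub
      (tendsto_stirlingRemainder_add_nat hz)
  rw [sub_zero] at hlim
  exact sub_eq_zero.1 (eq_of_tendsto_add_nat
    (f := fun y ↦ binetIntegral y - stirlingRemainder y) hper hlim)

theorem stirlingRemainder_sub_two_mul (hz : 0 < z) :
    stirlingRemainder z - stirlingRemainder (2 * z) =
      z * log z - z + 1 / 2 * log (2 * π) - log (Gamma (z + 1 / 2)) := by
  have hΓ := Gamma_pos_of_pos hz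
  have hΓ_half := Gamma_pos_of_pos (by positivity : 0 < z + 1 / 2)
  have hΓ_two := Gamma_pos_of_pos (by positivity : 0 < 2 * z)
  have hdup : log (Gamma z) + log (Gamma (z + 1 / 2)) =
      log (Gamma (2 * z)) + (1 - 2 * z) * log 2 + log π / 2 := by
    rw [← log_mul hΓ.ne' hΓ_half.ne', Gamma_mul_Gamma_add_half, log_mul (by positivity)
      (by positivity), log_mul hΓ_two.ne' (by positivity), log_rpow two_pos, log_sqrt pi_pos.le]
  rw [stirlingRemainder, stirlingRemainder, log_mul two_ne_zero hz.ne',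
    log_mul two_ne_zero pi_ne_zero]
  linear_combination hdup

theorem inv_exp_add_one_eq (hy : y ≠ 0) :
    (exp y + 1)⁻¹ = (exp y - 1)⁻¹ - 2 * (exp (2 * y) - 1)⁻¹ := by
  have hsub := exp_sub_one_ne_zero hy
  have hadd : exp y + 1 ≠ 0 := by positivity
  rw [show exp (2 * y) - 1 = (exp y - 1) * (exp y + 1) by rw [two_mul, exp_add]; ring]
  field_simp
  ring

theorem binetIntegral_two_mul (z : ℝ) :
    binetIntegral (2 * z) =
      2 * ∫ x in Ioi 0, 2 * (arctan (x / z) * (exp (2 * (2 * π * x)) - 1)⁻¹) := by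
  have hsubst := integral_comp_mul_left_Ioi
    (fun x ↦ arctan (x / (2 * z)) * (exp (2 * π * x) - 1)⁻¹) 0 two_pos
  rw [mul_zero, smul_eq_mul] at hsubst
  rw [binetIntegral, integral_const_mul, ← mul_inv_cancel_left₀ two_ne_zero (∫ x in Ioi 0, _),
    ← hsubst]
  simp only [mul_div_mul_left _ z two_ne_zero, mul_left_comm _ (2 : ℝ)]

theorem two_mul_integral_arctan_div_exp_add_one (z : ℝ) :
    2 * ∫ x in Ioi 0, arctan (x / z) / (exp (2 * π * x) + 1) =
      binetIntegral z - binetIntegral (2 * z) := by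
  have hint : IntegrableOn (fun x ↦ arctan (x / z) * (exp (2 * π * x) - 1)⁻¹) (Ioi 0) :=
    integrable_arctan_div_mul (integrableOn_mul_inv_exp_sub_one two_pi_pos) z
  have hint_two : IntegrableOn
      (fun x ↦ 2 * (arctan (x / z) * (exp (2 * (2 * π * x)) - 1)⁻¹)) (Ioi 0) := by
    simp_rw [← mul_assoc 2 (2 * π)]
    exact (integrable_arctan_div_mul
      (integrableOn_mul_inv_exp_sub_one (mul_pos two_pos two_pi_pos)) z).const_mul 2
  rw [binetIntegral_two_mul, binetIntegral, ← mul_sub, ← integral_sub hint hint_two]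
  congr 1
  refine setIntegral_congr_fun measurableSet_Ioi fun x (hx : 0 < x) ↦ ?_
  rw [div_eq_mul_inv, inv_exp_add_one_eq (by positivity)]
  ring

end

/-- 2 ∫₀^∞ arctan(x/z)/(e^{2πx}+1) dx = z log z − z + (1/2) log(2π) − log Γ(z+1/2), z > 0. -/
theorem integral_arctan_div_exp_add_one (z : ℝ) (hz : 0 < z) :
    2 * (∫ x in Set.Ioi (0 : ℝ), Real.arctan (x / z) / (Real.exp (2 * π * x) + 1)) =
      z * Real.log z - z + (1 / 2) * Real.log (2 * π)
        - Real.log (Real.Gamma (z + 1 / 2)) := by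
  rw [two_mul_integral_arctan_div_exp_add_one, binetIntegral_eq_stirlingRemainder hz,
    binetIntegral_eq_stirlingRemainder (by positivity), stirlingRemainder_sub_two_mul hz]
end

section
/- For every real z > −1, the Barnes G-function satisfies log G(z+1) = z(1−z)/2 + (z/2)·log(2π) + ∫₀^z x·ψ(x) dx, where ψ is the digamma function. -/
open Real MeasureTheory Filter

/-!
Expand each term of `ζ(s, a + 1) = ∑ (n + 1 + a) ^ (-s)` to second order in `a` around `0`: the
Taylor polynomials sum to a combination of `ζ(s)`, `s ζ(s + 1)` and `s (s + 1) ζ(s + 2)`, all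
regular at `-1`, and the remainders converge absolutely for `-2 < re s`, so the expansion survives
analytic continuation. Its derivative in `s` at `-1` expresses `ζ'(-1, a + 1)` as a quadratic
polynomial in `a` plus a series whose termwise derivative in `a` is the Weierstrass series of
`log Γ(a + 1) + γ a`. Hence `d/da ζ'(-1, a + 1) = log Γ(a + 1) + a + (1 - log (2π)) / 2` for
`-1 < a`, and this determines the derivative of `log G(z + 1)`. Integrating from `0` and using
`x ψ(x + 1) = x ψ(x) + 1` gives the formula.
-/

/-- The remainder of order `k` in the binomial expansion of `(1 + h) ^ r` around `h = 0`. -/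
noncomputable def binomialRemainder (k : ℕ) (r : ℂ) (h : ℝ) : ℂ :=
  ((1 + h : ℝ) : ℂ) ^ r -
    ∑ j ∈ Finset.range k, (descPochhammer ℂ j).eval r / (j.factorial : ℂ) * (h : ℂ) ^ j

theorem descPochhammer_eval_succ_left {R : Type*} [CommRing R] (k : ℕ) (r : R) :
    (descPochhammer R (k + 1)).eval r = r * (descPochhammer R k).eval (r - 1) := by
  simp [descPochhammer_succ_left]

theorem binomialRemainder_succ_zero (k : ℕ) (r : ℂ) : binomialRemainder (k + 1) r 0 = 0 := by
  simp [binomialRemainder, Finset.sum_range_succ']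

theorem hasDerivAt_binomialRemainder_succ (k : ℕ) (r : ℂ) {h : ℝ} (hh : -1 < h) :
    HasDerivAt (binomialRemainder (k + 1) r) (r * binomialRemainder k (r - 1) h) h := by
  have hpow : HasDerivAt (fun t : ℝ => ((1 + t : ℝ) : ℂ) ^ r)
      (r * ((1 + h : ℝ) : ℂ) ^ (r - 1)) h := by
    have hslit : (1 : ℂ) + h ∈ Complex.slitPlane :=
      Or.inl (by simpa using neg_lt_iff_pos_add'.mp hh)
    simpa using (((hasDerivAt_id (h : ℂ)).const_add 1).cpow_const hslit).comp_ofReal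
  have hterm (j : ℕ) : HasDerivAt
      (fun t : ℝ => (descPochhammer ℂ (j + 1)).eval r / ((j + 1).factorial : ℂ) * (t : ℂ) ^ (j + 1))
      (r * ((descPochhammer ℂ j).eval (r - 1) / (j.factorial : ℂ) * (h : ℂ) ^ j)) h := by
    refine ((hasDerivAt_pow (j + 1) (h : ℂ)).comp_ofReal.const_mul _).congr_deriv ?_
    rw [descPochhammer_eval_succ_left, Nat.factorial_succ]
    have hj : (j : ℂ) + 1 ≠ 0 := Nat.cast_add_one_ne_zero j
    have hfac : (j.factorial : ℂ) ≠ 0 := mod_cast j.factorial_ne_zero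
    push_cast
    field_simp
  have hsum := HasDerivAt.fun_sum fun j (_ : j ∈ Finset.range k) => hterm j
  refine ((hpow.sub (hsum.add_const 1)).congr_deriv ?_).congr_of_eventuallyEq
    (.of_forall fun t => ?_)
  · simp only [binomialRemainder, Finset.mul_sum, mul_sub]
  · simp [binomialRemainder, Finset.sum_range_succ' _ k]

theorem norm_binomialRemainder_le {c : ℝ} (hc : 0 < c) (hc1 : c ≤ 1) (k : ℕ) {r : ℂ}
    (hr : r.re ≤ k) {h : ℝ} (hh : c ≤ 1 + h) :
    ‖binomialRemainder k r h‖ ≤ ‖(descPochhammer ℂ k).eval r‖ * c ^ (r.re - k) * |h| ^ k := by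
  induction k generalizing r h with
  | zero =>
    have hr0 : r.re ≤ 0 := by simpa using hr
    simpa [binomialRemainder, Complex.norm_cpow_eq_rpow_re_of_pos (hc.trans_le hh),
      -Complex.ofReal_add] using Real.rpow_le_rpow_of_nonpos hc hh hr0
  | succ k ih =>
    set D : ℝ := ‖(descPochhammer ℂ (k + 1)).eval r‖ * c ^ (r.re - (k + 1 : ℕ))
    have hlower : ∀ t ∈ Set.uIcc 0 h, c ≤ 1 + t := fun t ht => by
      have := ht.1
      rcases min_choice 0 h with hmin | hmin <;> rw [hmin] at this <;> linarith
    have hderiv : ∀ t ∈ Set.uIcc 0 h, HasDerivWithinAt (binomialRemainder (k + 1) r)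
        (r * binomialRemainder k (r - 1) t) (Set.uIcc 0 h) t := fun t ht =>
      (hasDerivAt_binomialRemainder_succ k r (by linarith [hlower t ht])).hasDerivWithinAt
    have hbound : ∀ t ∈ Set.uIcc 0 h, ‖r * binomialRemainder k (r - 1) t‖ ≤ D * |h| ^ k := by
      intro t ht
      have hth : |t| ≤ |h| := by simpa using Set.abs_sub_left_of_mem_uIcc ht
      have hre : (r - 1).re - k = r.re - (k + 1 : ℕ) := by push_cast; simp; ring
      calc ‖r * binomialRemainder k (r - 1) t‖
          ≤ ‖r‖ * (‖(descPochhammer ℂ k).eval (r - 1)‖ * c ^ ((r - 1).re - k) * |t| ^ k) := by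
            rw [norm_mul]
            gcongr
            exact ih (by simpa using hr) (hlower t ht)
        _ = D * |t| ^ k := by
            simp only [D, descPochhammer_eval_succ_left, norm_mul, hre]
            ring
        _ ≤ D * |h| ^ k := by gcongr
    have hmvt := (convex_uIcc 0 h).norm_image_sub_le_of_norm_hasDerivWithin_le hderiv hbound
      Set.left_mem_uIcc Set.right_mem_uIcc
    simpa [binomialRemainder_succ_zero, pow_succ, mul_assoc] using hmvt

theorem binomialRemainder_three (r : ℂ) (h : ℝ) :
    binomialRemainder 3 r h = ((1 + h : ℝ) : ℂ) ^ r - (1 + r * h + r * (r - 1) / 2 * h ^ 2) := by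
  simp [binomialRemainder, Finset.sum_range_succ, descPochhammer_succ_left]

theorem hasDerivAt_binomialRemainder_three_left (r : ℂ) {h : ℝ} (hh : -1 < h) :
    HasDerivAt (fun r => binomialRemainder 3 r h)
      (((1 + h : ℝ) : ℂ) ^ r * Real.log (1 + h) - (h + (2 * r - 1) / 2 * h ^ 2)) r := by
  have hpos : 0 < 1 + h := neg_lt_iff_pos_add'.1 hh
  have hpow := (hasDerivAt_id r).const_cpow (c := ((1 + h : ℝ) : ℂ)) (Or.inl (mod_cast hpos.ne'))
  have hlin := ((hasDerivAt_id r).mul_const (h : ℂ)).const_add 1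
  have hquad := (((hasDerivAt_id r).mul ((hasDerivAt_id r).sub_const 1)).div_const 2).mul_const
    ((h : ℂ) ^ 2)
  simp only [binomialRemainder_three]
  refine (hpow.sub (hlin.add hquad)).congr_deriv ?_
  rw [Complex.ofReal_log hpos.le]
  simp only [id]
  ring

theorem hasSum_deriv_of_eventually_hasSum {ι E : Type*} [NormedAddCommGroup E] [NormedSpace ℂ E]
    [CompleteSpace E] {U : Set ℂ} {f : ι → ℂ → E} {F : ℂ → E} {u : ι → ℝ} (hu : Summable u)
    (hU : IsOpen U) (hUc : IsPreconnected U) (hf : ∀ i, DifferentiableOn ℂ (f i) U)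
    (hfu : ∀ i, ∀ w ∈ U, ‖f i w‖ ≤ u i) (hF : DifferentiableOn ℂ F U) {z₀ : ℂ} (hz₀ : z₀ ∈ U)
    (hsum : ∀ᶠ w in nhds z₀, HasSum (f · w) (F w)) {z : ℂ} (hz : z ∈ U) :
    HasSum (fun i => deriv (f i) z) (deriv F z) := by
  have htsum : DifferentiableOn ℂ (fun w => ∑' i, f i w) U :=
    Complex.differentiableOn_tsum_of_summable_norm hu hf hU hfu
  have heq : Set.EqOn (fun w => ∑' i, f i w) F U :=
    (htsum.analyticOnNhd hU).eqOn_of_preconnected_of_eventuallyEq (hF.analyticOnNhd hU) hUc hz₀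
      (hsum.mono fun _ hw => hw.tsum_eq)
  rw [← (heq.eventuallyEq_of_mem (hU.mem_nhds hz)).deriv_eq]
  exact Complex.hasSum_deriv_of_summable_norm hu hf hU hfu hz

theorem riemannZeta₁_eq_sub_one_mul {s : ℂ} (hs : s ≠ 1) :
    riemannZeta₁ s = (s - 1) * riemannZeta s := by
  rw [riemannZeta_eq_inv_sub_mul hs, mul_inv_cancel_left₀ (sub_ne_zero_of_ne hs)]

theorem deriv_riemannZeta₁_zero : deriv riemannZeta₁ 0 = (Real.log (2 * π) - 1) / 2 := by
  have hmul : HasDerivAt (fun s : ℂ => (s - 1) * riemannZeta s)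
      (1 * riemannZeta 0 + (0 - 1) * deriv riemannZeta 0) 0 :=
    ((hasDerivAt_id (0 : ℂ)).sub_const 1).mul
      (differentiableAt_riemannZeta zero_ne_one).hasDerivAt
  have heq : riemannZeta₁ =ᶠ[nhds 0] fun s : ℂ => (s - 1) * riemannZeta s :=
    (eventually_ne_nhds zero_ne_one).mono fun s => riemannZeta₁_eq_sub_one_mul
  rw [heq.deriv_eq, hmul.deriv, riemannZeta_zero, deriv_riemannZeta_zero,
    Complex.ofReal_log (by positivity)]
  push_cast
  ring

theorem hurwitzZetaReal_one (s : ℂ) : hurwitzZetaReal s 1 = riemannZeta s := by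
  have hone : ((1 : ℝ) : UnitAddCircle) = 0 := AddCircle.coe_period 1
  simp [hurwitzZetaReal, hone, HurwitzZeta.hurwitzZeta_zero]

theorem hurwitzZetaReal_add_one (s : ℂ) {a : ℝ} (ha : 0 < a) :
    hurwitzZetaReal s (a + 1) = hurwitzZetaReal s a - (a : ℂ) ^ (-s) := by
  obtain ⟨m, hm⟩ : ∃ m, ⌈a⌉₊ = m + 1 := ⟨⌈a⌉₊ - 1, by have := Nat.ceil_pos.2 ha; omega⟩
  have hcircle : ((a + 1 : ℝ) : UnitAddCircle) = a := AddCircle.coe_add_period 1 a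
  simp only [hurwitzZetaReal, Nat.ceil_add_one ha.le, hm, hcircle, Nat.add_sub_cancel,
    Finset.sum_range_succ, sub_sub]
  push_cast
  simp

theorem sub_natCeil_sub_one_pos {a : ℝ} (ha : 0 < a) : 0 < a - (⌈a⌉₊ - 1) := by
  linarith [Nat.ceil_lt_add_one ha.le]

theorem differentiable_hurwitzZetaReal_correction {a : ℝ} (ha : 0 < a) :
    Differentiable ℂ fun s : ℂ => ∑ k ∈ Finset.range (⌈a⌉₊ - 1),
      ((a - (⌈a⌉₊ - 1) + k : ℝ) : ℂ) ^ (-s) := by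
  refine Differentiable.fun_sum fun k _ s => DifferentiableAt.const_cpow (by fun_prop) (Or.inl ?_)
  have := add_pos_of_pos_of_nonneg (sub_natCeil_sub_one_pos ha) k.cast_nonneg
  exact mod_cast this.ne'

theorem differentiableAt_hurwitzZetaReal {a : ℝ} (ha : 0 < a) {s : ℂ} (hs : s ≠ 1) :
    DifferentiableAt ℂ (fun s => hurwitzZetaReal s a) s :=
  (HurwitzZeta.differentiableAt_hurwitzZeta _ hs).fun_sub
    (differentiable_hurwitzZetaReal_correction ha s)

theorem differentiable_hurwitzZetaReal_sub_riemannZeta {a : ℝ} (ha : 0 < a) :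
    Differentiable ℂ fun s => hurwitzZetaReal s a - riemannZeta s := by
  have hdiff := (HurwitzZeta.differentiable_hurwitzZeta_sub_hurwitzZeta a 0).fun_sub
    (differentiable_hurwitzZetaReal_correction ha)
  simpa only [hurwitzZetaReal, HurwitzZeta.hurwitzZeta_zero, sub_right_comm] using! hdiff

theorem hasSum_hurwitzZetaReal {a : ℝ} (ha : 0 < a) {s : ℂ} (hs : 1 < s.re) :
    HasSum (fun n : ℕ => ((n + a : ℝ) : ℂ) ^ (-s)) (hurwitzZetaReal s a) := by
  obtain ⟨m, hm⟩ : ∃ m, ⌈a⌉₊ = m + 1 := ⟨⌈a⌉₊ - 1, by have := Nat.ceil_pos.2 ha; omega⟩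
  have hpos : 0 < a - m := by simpa [hm] using sub_natCeil_sub_one_pos ha
  have hle : a - m ≤ 1 := by
    have := Nat.le_ceil a
    rw [hm] at this
    push_cast at this
    linarith
  have hcircle : ((a - m : ℝ) : UnitAddCircle) = a := by
    rw [AddCircle.coe_sub, sub_eq_self, AddCircle.coe_eq_zero_iff]
    exact ⟨m, by simp⟩
  have hsum := HurwitzZeta.hasSum_hurwitzZeta_of_one_lt_re ⟨hpos.le, hle⟩ hs
  rw [hcircle] at hsum
  convert! (hasSum_nat_add_iff' m).2 hsum using 1
  · ext n
    rw [Complex.cpow_neg, one_div]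
    push_cast
    ring_nf
  · simp only [hurwitzZetaReal, hm, Nat.add_sub_cancel, Complex.cpow_neg, one_div]
    push_cast
    ring_nf

theorem hasSum_riemannZeta_nat_add_one {s : ℂ} (hs : 1 < s.re) :
    HasSum (fun n : ℕ => ((n + 1 : ℝ) : ℂ) ^ (-s)) (riemannZeta s) :=
  hurwitzZetaReal_one s ▸ hasSum_hurwitzZetaReal one_pos hs

theorem hasDerivAt_const_cpow_neg {x : ℝ} (hx : 0 < x) (s : ℂ) :
    HasDerivAt (fun s : ℂ => (x : ℂ) ^ (-s)) (-((x : ℂ) ^ (-s) * Real.log x)) s := by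
  have := (hasDerivAt_neg s).const_cpow (c := (x : ℂ)) (Or.inl (mod_cast hx.ne'))
  simpa [Complex.ofReal_log hx.le] using this

theorem hurwitzZetaDerivNegOne_one : hurwitzZetaDerivNegOne 1 = deriv riemannZeta (-1) := by
  simp only [hurwitzZetaDerivNegOne, hurwitzZetaReal_one]

theorem hurwitzZetaDerivNegOne_add_one {a : ℝ} (ha : 0 < a) :
    hurwitzZetaDerivNegOne (a + 1) = hurwitzZetaDerivNegOne a + a * Real.log a := by
  have hderiv := (differentiableAt_hurwitzZetaReal ha (s := -1) (by norm_num)).hasDerivAt.fun_sub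
    (hasDerivAt_const_cpow_neg ha (-1))
  simp only [hurwitzZetaDerivNegOne, hurwitzZetaReal_add_one _ ha, hderiv.deriv]
  simp

/-- The remainder of the second-order Taylor expansion around `a = 0` of `(n + 1 + a) ^ (-s)`,
the `n`-th term of the Dirichlet series of `ζ(s, a + 1)`. -/
noncomputable def hurwitzTaylorRemainder (a : ℝ) (n : ℕ) (s : ℂ) : ℂ :=
  ((n + 1 : ℝ) : ℂ) ^ (-s) * binomialRemainder 3 (-s) (a / (n + 1))

/-- The entire function of `s` equal to `∑ n, hurwitzTaylorRemainder a n s` where that series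
converges. The factor `riemannZeta₁ (s + 1)` stands for `s * ζ(s + 1)` and `riemannZeta₁ (s + 2)`
for `(s + 1) * ζ(s + 2)`, which removes the poles at `0` and `-1`. -/
noncomputable def hurwitzTaylorRemainderSum (a : ℝ) (s : ℂ) : ℂ :=
  hurwitzZetaReal s (a + 1) - riemannZeta s + a * riemannZeta₁ (s + 1) -
    a ^ 2 / 2 * (s * riemannZeta₁ (s + 2))

theorem hurwitzTaylorRemainder_eq {a : ℝ} (ha : -1 < a) (n : ℕ) (s : ℂ) :
    hurwitzTaylorRemainder a n s =
      ((n + (a + 1) : ℝ) : ℂ) ^ (-s) - ((n + 1 : ℝ) : ℂ) ^ (-s)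
        + a * (s * ((n + 1 : ℝ) : ℂ) ^ (-(s + 1)))
        - a ^ 2 / 2 * (s * ((s + 1) * ((n + 1 : ℝ) : ℂ) ^ (-(s + 2)))) := by
  have hn : (0 : ℝ) < n + 1 := by positivity
  have hn0 : ((n + 1 : ℝ) : ℂ) ≠ 0 := mod_cast hn.ne'
  have hsplit : (n + (a + 1) : ℝ) = (n + 1) * (1 + a / (n + 1)) := by field_simp; ring
  have hfactor : 0 ≤ 1 + a / (n + 1) :=
    (pos_of_mul_pos_right (hsplit ▸ by positivity [neg_lt_iff_pos_add.1 ha]) hn.le).le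
  rw [hurwitzTaylorRemainder, binomialRemainder_three, hsplit, Complex.ofReal_mul,
    Complex.mul_cpow_ofReal_nonneg hn.le hfactor, neg_add, neg_add, Complex.cpow_add _ _ hn0,
    Complex.cpow_add _ _ hn0, Complex.cpow_neg_one, Complex.cpow_neg _ 2, Complex.cpow_ofNat]
  push_cast at hn0 ⊢
  field_simp
  ring

theorem differentiable_hurwitzTaylorRemainder {a : ℝ} (ha : -1 < a) (n : ℕ) :
    Differentiable ℂ (hurwitzTaylorRemainder a n) := by
  have hn : (0 : ℝ) < n + 1 := by positivity
  have hna : (0 : ℝ) < n + (a + 1) := add_pos_of_nonneg_of_pos n.cast_nonneg (by linarith)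
  have hcpow {x : ℝ} (hx : 0 < x) : Differentiable ℂ fun s : ℂ => (x : ℂ) ^ (-s) := fun s =>
    (hasDerivAt_const_cpow_neg hx s).differentiableAt
  have := hcpow hna
  have h₁ := hcpow hn
  have h₂ : Differentiable ℂ fun s : ℂ => ((n + 1 : ℝ) : ℂ) ^ (-(s + 1)) :=
    h₁.comp (differentiable_id.add_const 1)
  have h₃ : Differentiable ℂ fun s : ℂ => ((n + 1 : ℝ) : ℂ) ^ (-(s + 2)) :=
    h₁.comp (differentiable_id.add_const 2)
  rw [funext (hurwitzTaylorRemainder_eq ha n)]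
  fun_prop

theorem differentiable_hurwitzTaylorRemainderSum {a : ℝ} (ha : -1 < a) :
    Differentiable ℂ (hurwitzTaylorRemainderSum a) := by
  have := differentiable_hurwitzZetaReal_sub_riemannZeta (neg_lt_iff_pos_add.1 ha)
  unfold hurwitzTaylorRemainderSum
  fun_prop

theorem hasSum_hurwitzTaylorRemainder {a : ℝ} (ha : -1 < a) {s : ℂ} (hs : 1 < s.re) :
    HasSum (fun n => hurwitzTaylorRemainder a n s) (hurwitzTaylorRemainderSum a s) := by
  have hζ {k : ℝ} (hk : 0 < k) : s + k ≠ 1 := fun h => by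
    have := congrArg Complex.re h
    simp at this
    linarith
  have h₀ := hasSum_hurwitzZetaReal (neg_lt_iff_pos_add.1 ha) hs
  have h₁ := hasSum_riemannZeta_nat_add_one hs
  have h₂ := hasSum_riemannZeta_nat_add_one (s := s + 1) (by simp; linarith)
  have h₃ := hasSum_riemannZeta_nat_add_one (s := s + 2) (by simp; linarith)
  have hsum := ((h₀.sub h₁).add ((h₂.mul_left s).mul_left (a : ℂ))).sub
    (((h₃.mul_left (s + 1)).mul_left s).mul_left ((a : ℂ) ^ 2 / 2))
  simp only [hurwitzTaylorRemainder_eq ha]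
  convert! hsum using 1
  rw [hurwitzTaylorRemainderSum,
    riemannZeta₁_eq_sub_one_mul (by simpa using hζ one_pos),
    riemannZeta₁_eq_sub_one_mul (by simpa using hζ two_pos)]
  ring

theorem min_one_one_add_le_one_add_div (a : ℝ) {x : ℝ} (hx : 1 ≤ x) :
    min 1 (1 + a) ≤ 1 + a / x := by
  rcases le_total 0 a with ha | ha
  · exact (min_le_left _ _).trans (le_add_of_nonneg_right (by positivity))
  · have hdiv : a ≤ a / x := (le_div_iff₀ (by positivity)).2 (mul_le_of_one_le_right ha hx)
    exact (min_le_right _ _).trans (by gcongr)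

-- The ball reaches from the half-plane `1 < re s` of the Dirichlet series past `-1`, while
-- `-3 / 2 < re s` on it keeps the third-order remainders, of size `n ^ (-re s - 3)`, summable.
theorem exists_norm_hurwitzTaylorRemainder_le {a : ℝ} (ha : -1 < a) :
    ∃ C, ∀ n : ℕ, ∀ s ∈ Metric.ball (1 : ℂ) (5 / 2),
      ‖hurwitzTaylorRemainder a n s‖ ≤ C * (n + 1 : ℝ) ^ (-(3 / 2) : ℝ) := by
  obtain ⟨M, hM⟩ := (isCompact_closedBall (1 : ℂ) (5 / 2)).exists_bound_of_continuousOn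
    (f := fun s => (descPochhammer ℂ 3).eval (-s)) (by fun_prop)
  set c : ℝ := min 1 (1 + a)
  have hc : 0 < c := lt_min one_pos (by linarith)
  have hc1 : c ≤ 1 := min_le_left _ _
  -- On the ball `re s < 7 / 2`, so the exponent `-re s - 3` of `c` stays above `-7`.
  refine ⟨M * c ^ (-7 : ℝ) * |a| ^ 3, fun n s hs => ?_⟩
  set x : ℝ := n + 1
  have hx1 : 1 ≤ x := by simp [x]
  have hx : 0 < x := one_pos.trans_le hx1
  have hre : |s.re - 1| < 5 / 2 := by
    simpa using (Complex.abs_re_le_norm (s - 1)).trans_lt (mem_ball_iff_norm.1 hs)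
  obtain ⟨hre_lower, hre_upper⟩ := abs_lt.1 hre
  have hMs := hM s (Metric.ball_subset_closedBall hs)
  have hM0 : 0 ≤ M := (norm_nonneg _).trans hMs
  have hrem : ‖binomialRemainder 3 (-s) (a / x)‖ ≤ M * c ^ (-7 : ℝ) * |a / x| ^ 3 :=
    (norm_binomialRemainder_le hc hc1 3 (by simp; linarith)
      (min_one_one_add_le_one_add_div a hx1)).trans <| by
      gcongr ?_ * ?_ * _
      exact Real.rpow_le_rpow_of_exponent_ge hc hc1 (by simp; linarith)
  calc ‖hurwitzTaylorRemainder a n s‖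
      ≤ x ^ (-s.re) * (M * c ^ (-7 : ℝ) * |a / x| ^ 3) := by
        rw [hurwitzTaylorRemainder, norm_mul, Complex.norm_cpow_eq_rpow_re_of_pos hx,
          Complex.neg_re]
        gcongr
    _ = M * c ^ (-7 : ℝ) * |a| ^ 3 * x ^ (-s.re - 3) := by
        rw [abs_div, abs_of_pos hx, div_pow, Real.rpow_sub hx, Real.rpow_ofNat]
        ring
    _ ≤ M * c ^ (-7 : ℝ) * |a| ^ 3 * x ^ (-(3 / 2) : ℝ) := by
        gcongr
        linarith

theorem hasSum_deriv_hurwitzTaylorRemainder {a : ℝ} (ha : -1 < a) :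
    HasSum (fun n => deriv (hurwitzTaylorRemainder a n) (-1))
      (deriv (hurwitzTaylorRemainderSum a) (-1)) := by
  obtain ⟨C, hC⟩ := exists_norm_hurwitzTaylorRemainder_le ha
  have hsummable : Summable fun n : ℕ => C * (n + 1 : ℝ) ^ (-(3 / 2) : ℝ) := by
    have := (summable_nat_add_iff 1).2 ((Real.summable_nat_rpow (p := -(3 / 2))).2 (by norm_num))
    exact Summable.mul_left C (by simpa using this)
  have hright : {s : ℂ | 1 < s.re} ∈ nhds (2 : ℂ) :=
    (isOpen_lt continuous_const Complex.continuous_re).mem_nhds (by simp)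
  exact hasSum_deriv_of_eventually_hasSum hsummable Metric.isOpen_ball
    (convex_ball (1 : ℂ) (5 / 2)).isPreconnected
    (fun n => (differentiable_hurwitzTaylorRemainder ha n).differentiableOn) hC
    (differentiable_hurwitzTaylorRemainderSum ha).differentiableOn (z₀ := 2)
    (by rw [mem_ball_iff_norm]; norm_num)
    (mem_of_superset hright fun s hs => hasSum_hurwitzTaylorRemainder ha hs)
    (by rw [mem_ball_iff_norm]; norm_num)

/-- The derivative in `s` of `hurwitzTaylorRemainder a n s` at `s = -1`. Its derivative in `a` is
the `n`-th term of the Weierstrass series of `log Γ(a + 1) + γ a`. -/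
noncomputable def hurwitzDerivTerm (n : ℕ) (a : ℝ) : ℝ :=
  -((n + 1 + a) * Real.log (1 + a / (n + 1))) + a + a ^ 2 / (2 * (n + 1))

theorem deriv_hurwitzTaylorRemainder_neg_one {a : ℝ} (ha : -1 < a) (n : ℕ) :
    deriv (hurwitzTaylorRemainder a n) (-1) = hurwitzDerivTerm n a := by
  have hn : (0 : ℝ) < n + 1 := by positivity
  have hna : -1 < a / (n + 1) := (lt_div_iff₀ hn).2 (by linarith [n.cast_nonneg (α := ℝ)])
  have hleft := hasDerivAt_binomialRemainder_three_left (- -1) hna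
  have hrem : HasDerivAt (fun s : ℂ => binomialRemainder 3 (-s) (a / (n + 1))) _ (-1) :=
    hleft.comp (-1) (hasDerivAt_neg (-1))
  have hfactor : (n + 1 + a : ℂ) = (n + 1) * (1 + a / (n + 1)) := by
    field_simp
  refine ((hasDerivAt_const_cpow_neg hn (-1)).mul hrem).deriv.trans ?_
  simp only [hurwitzDerivTerm, binomialRemainder_three, neg_neg, Complex.cpow_one]
  push_cast
  rw [hfactor]
  field_simp
  ring

theorem deriv_hurwitzTaylorRemainderSum_neg_one {a : ℝ} (ha : -1 < a) :
    deriv (hurwitzTaylorRemainderSum a) (-1) =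
      hurwitzZetaDerivNegOne (a + 1) - deriv riemannZeta (-1)
        + a * ((Real.log (2 * π) - 1) / 2)
        - a ^ 2 / 2 * (1 - Real.eulerMascheroniConstant) := by
  have hζ : HasDerivAt (fun s => hurwitzZetaReal s (a + 1)) (hurwitzZetaDerivNegOne (a + 1)) (-1) :=
    (differentiableAt_hurwitzZetaReal (neg_lt_iff_pos_add.1 ha) (by norm_num)).hasDerivAt
  have hζ₁ (k : ℂ) : HasDerivAt (fun s : ℂ => riemannZeta₁ (s + k))
      (deriv riemannZeta₁ (-1 + k)) (-1) :=
    HasDerivAt.comp_add_const (-1 : ℂ) k (differentiable_riemannZeta₁ _).hasDerivAt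
  have hsum := ((hζ.sub (differentiableAt_riemannZeta (s := -1) (by norm_num)).hasDerivAt).add
    ((hζ₁ 1).const_mul (a : ℂ))).sub
    (((hasDerivAt_id (-1 : ℂ)).mul (hζ₁ 2)).const_mul ((a : ℂ) ^ 2 / 2))
  refine hsum.deriv.trans ?_
  rw [neg_add_cancel, show (-1 + 2 : ℂ) = 1 by norm_num, deriv_riemannZeta₁_zero,
    deriv_riemannZeta₁_one, riemannZeta₁_one]
  simp only [id]
  ring

theorem hasSum_hurwitzDerivTerm {a : ℝ} (ha : -1 < a) :
    HasSum (fun n => (hurwitzDerivTerm n a : ℂ))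
      (hurwitzZetaDerivNegOne (a + 1) - deriv riemannZeta (-1)
        + a * ((Real.log (2 * π) - 1) / 2)
        - a ^ 2 / 2 * (1 - Real.eulerMascheroniConstant)) := by
  simpa only [deriv_hurwitzTaylorRemainder_neg_one ha, deriv_hurwitzTaylorRemainderSum_neg_one ha]
    using hasSum_deriv_hurwitzTaylorRemainder ha

theorem hurwitzZetaDerivNegOne_add_one_eq_tsum {a : ℝ} (ha : -1 < a) :
    hurwitzZetaDerivNegOne (a + 1) = deriv riemannZeta (-1) +
      ((a * ((1 - Real.log (2 * π)) / 2) + a ^ 2 / 2 * (1 - Real.eulerMascheroniConstant)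
        + ∑' n, hurwitzDerivTerm n a : ℝ) : ℂ) := by
  push_cast
  rw [(hasSum_hurwitzDerivTerm ha).tsum_eq]
  ring

theorem hasDerivAt_hurwitzDerivTerm (n : ℕ) {a : ℝ} (ha : -1 < a) :
    HasDerivAt (hurwitzDerivTerm n) (a / (n + 1) - Real.log (1 + a / (n + 1))) a := by
  have hn : (0 : ℝ) < n + 1 := by positivity
  have hna : 0 < 1 + a / (n + 1) :=
    neg_lt_iff_pos_add'.1 ((lt_div_iff₀ hn).2 (by linarith [n.cast_nonneg (α := ℝ)]))
  have hne : (n + 1 + a : ℝ) ≠ 0 := by linarith [n.cast_nonneg (α := ℝ)]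
  have hlog := (((hasDerivAt_id a).div_const ((n : ℝ) + 1)).const_add 1).log hna.ne'
  have hsum := ((((hasDerivAt_id a).const_add ((n : ℝ) + 1)).mul hlog).neg.add
    (hasDerivAt_id a)).add ((hasDerivAt_pow 2 a).div_const (2 * ((n : ℝ) + 1)))
  refine hsum.congr_deriv ?_
  simp only [id]
  push_cast
  field_simp
  ring

theorem abs_sub_log_one_add_le {h : ℝ} (hh : -1 < h) :
    |h - Real.log (1 + h)| ≤ h ^ 2 / (1 + h) := by
  have hpos : 0 < 1 + h := neg_lt_iff_pos_add'.1 hh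
  have hupper := Real.log_le_sub_one_of_pos hpos
  have hlower := Real.one_sub_inv_le_log_of_pos hpos
  have heq : h - (1 - (1 + h)⁻¹) = h ^ 2 / (1 + h) := by field_simp; ring
  rw [abs_of_nonneg (by linarith)]
  linarith

theorem abs_div_sub_log_one_add_div_le {c R a : ℝ} (hc : 0 < c) (hca : c ≤ min 1 (1 + a))
    (haR : |a| ≤ R) (n : ℕ) :
    |a / (n + 1) - Real.log (1 + a / (n + 1))| ≤ R ^ 2 / c * (1 / (n + 1 : ℝ) ^ 2) := by
  have hlower : c ≤ 1 + a / (n + 1) :=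
    hca.trans (min_one_one_add_le_one_add_div a (by simp))
  calc |a / (n + 1) - Real.log (1 + a / (n + 1))|
      ≤ (a / (n + 1)) ^ 2 / (1 + a / (n + 1)) := abs_sub_log_one_add_le (by linarith)
    _ ≤ (a / (n + 1)) ^ 2 / c := by gcongr
    _ = |a| ^ 2 / c * (1 / (n + 1 : ℝ) ^ 2) := by rw [sq_abs]; field_simp
    _ ≤ R ^ 2 / c * (1 / (n + 1 : ℝ) ^ 2) := by gcongr

theorem summable_const_mul_one_div_nat_add_one_sq (C : ℝ) :
    Summable fun n : ℕ => C * (1 / (n + 1 : ℝ) ^ 2) := by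
  have := (summable_nat_add_iff 1).2 (Real.summable_one_div_nat_pow (p := 2).2 one_lt_two)
  exact Summable.mul_left C (by simpa using this)

theorem sum_range_div_sub_log_one_add_div {a : ℝ} (ha : -1 < a) (n : ℕ) :
    ∑ i ∈ Finset.range n, (a / (i + 1) - Real.log (1 + a / (i + 1))) =
      Real.BohrMollerup.logGammaSeq (a + 1) n + (Real.log (n + (a + 1)) - Real.log n)
        + a * (harmonic n - Real.log n) := by
  have hfactorial : Real.log n.factorial = ∑ i ∈ Finset.range n, Real.log (i + 1) := by
    rw [← Finset.prod_range_add_one_eq_factorial, Nat.cast_prod, Real.log_prod]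
    · simp
    · intros; positivity
  have hharmonic : (harmonic n : ℝ) = ∑ i ∈ Finset.range n, 1 / (i + 1 : ℝ) := by
    simp [harmonic]
  have hterm (i : ℕ) : a / (i + 1) - Real.log (1 + a / (i + 1)) =
      a * (1 / (i + 1)) + Real.log (i + 1) - Real.log (a + 1 + i) := by
    have hi : (i + 1 : ℝ) ≠ 0 := by positivity
    have hia : a + 1 + i ≠ 0 := by linarith [i.cast_nonneg (α := ℝ)]
    rw [show 1 + a / (i + 1) = (a + 1 + i) / (i + 1) by field_simp; ring, Real.log_div hia hi]
    ring
  simp only [Real.BohrMollerup.logGammaSeq, hterm, Finset.sum_sub_distrib, Finset.sum_add_distrib,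
    ← Finset.mul_sum, ← hharmonic, ← hfactorial, Finset.sum_range_succ]
  rw [add_comm (n : ℝ)]
  ring

theorem tsum_div_sub_log_one_add_div {a : ℝ} (ha : -1 < a) :
    ∑' n : ℕ, (a / (n + 1) - Real.log (1 + a / (n + 1))) =
      Real.log (Real.Gamma (a + 1)) + a * Real.eulerMascheroniConstant := by
  have hsummable : Summable fun n : ℕ => a / (n + 1) - Real.log (1 + a / (n + 1)) :=
    .of_norm_bounded (summable_const_mul_one_div_nat_add_one_sq _) fun n =>
      abs_div_sub_log_one_add_div_le (lt_min one_pos (by linarith)) le_rfl le_rfl n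
  refine tendsto_nhds_unique hsummable.hasSum.tendsto_sum_nat ?_
  have hshift := (Real.tendsto_log_comp_add_sub_log (a + 1)).comp tendsto_natCast_atTop_atTop
  have hlim := ((Real.BohrMollerup.tendsto_log_gamma (neg_lt_iff_pos_add.1 ha)).add hshift).add
    (Real.tendsto_harmonic_sub_log.const_mul a)
  simpa only [sum_range_div_sub_log_one_add_div ha, add_zero] using! hlim

theorem hasDerivAt_tsum_hurwitzDerivTerm {a : ℝ} (ha : -1 < a) :
    HasDerivAt (fun a => ∑' n, hurwitzDerivTerm n a)
      (Real.log (Real.Gamma (a + 1)) + a * Real.eulerMascheroniConstant) a := by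
  rw [← tsum_div_sub_log_one_add_div ha]
  obtain ⟨b, hb, hba⟩ := exists_between ha
  have hmem : a ∈ Set.Ioo b (|a| + 1) := ⟨hba, by linarith [le_abs_self a]⟩
  refine hasDerivAt_tsum_of_isPreconnected
    (summable_const_mul_one_div_nat_add_one_sq ((|a| + 2) ^ 2 / min 1 (1 + b))) isOpen_Ioo
    isPreconnected_Ioo (fun n y hy => hasDerivAt_hurwitzDerivTerm n (hb.trans hy.1))
    (fun n y hy => ?_) hmem (Complex.summable_ofReal.1 (hasSum_hurwitzDerivTerm ha).summable) hmem
  refine abs_div_sub_log_one_add_div_le (lt_min one_pos (by linarith)) ?_ ?_ n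
  · gcongr
    exact hy.1.le
  · exact abs_le.2 ⟨by linarith [hy.1, abs_nonneg a], by linarith [hy.2]⟩

theorem hasDerivAt_hurwitzZetaDerivNegOne_add_one {a : ℝ} (ha : -1 < a) :
    HasDerivAt (fun a : ℝ => hurwitzZetaDerivNegOne (a + 1))
      ((Real.log (Real.Gamma (a + 1)) + a + (1 - Real.log (2 * π)) / 2 : ℝ) : ℂ) a := by
  have hreal : HasDerivAt (fun a => a * ((1 - Real.log (2 * π)) / 2)
      + a ^ 2 / 2 * (1 - Real.eulerMascheroniConstant) + ∑' n, hurwitzDerivTerm n a)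
      (Real.log (Real.Gamma (a + 1)) + a + (1 - Real.log (2 * π)) / 2) a := by
    refine ((((hasDerivAt_id a).mul_const _).add
      (((hasDerivAt_pow 2 a).div_const 2).mul_const _)).add
      (hasDerivAt_tsum_hurwitzDerivTerm ha)).congr_deriv ?_
    push_cast
    ring
  exact (hreal.ofReal_comp.const_add _).congr_of_eventuallyEq <|
    (lt_mem_nhds ha).mono fun _ => hurwitzZetaDerivNegOne_add_one_eq_tsum

theorem hasDerivAt_log_Gamma {x : ℝ} (hx : ∀ m : ℕ, x ≠ -m) :
    HasDerivAt (fun t => Real.log (Real.Gamma t)) (digamma x) x :=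
  ((Real.differentiableAt_Gamma hx).log (Real.Gamma_ne_zero hx)).hasDerivAt

theorem digamma_add_one {x : ℝ} (hx : ∀ m : ℕ, x ≠ -m) : digamma (x + 1) = digamma x + 1 / x := by
  have hx0 : x ≠ 0 := by simpa using hx 0
  have hx1 (m : ℕ) : x + 1 ≠ -m := fun h => hx (m + 1) (by push_cast; linarith)
  have heq : (fun t => Real.log (Real.Gamma (t + 1))) =ᶠ[nhds x]
      fun t => Real.log (Real.Gamma t) + Real.log t := by
    filter_upwards [eventually_ne_nhds hx0,
      (Real.differentiableAt_Gamma hx).continuousAt.eventually_ne (Real.Gamma_ne_zero hx)]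
      with t ht hΓ
    rw [Real.Gamma_add_one ht, Real.log_mul ht hΓ, add_comm]
  have hshift := HasDerivAt.comp_add_const x 1 (hasDerivAt_log_Gamma hx1)
  rw [one_div]
  exact (hshift.congr_of_eventuallyEq heq.symm).unique
    ((hasDerivAt_log_Gamma hx).add (Real.hasDerivAt_log hx0))

theorem monotoneOn_digamma : MonotoneOn digamma (Set.Ioi 0) :=
  Real.convexOn_log_Gamma.monotoneOn_deriv fun _ hx =>
    (hasDerivAt_log_Gamma fun m => (neg_nonpos.2 m.cast_nonneg |>.trans_lt hx).ne').differentiableAt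

theorem logBarnesG_add_one (z : ℝ) :
    logBarnesG (z + 1) = z * Real.log (Real.Gamma (z + 1)) + deriv riemannZeta (-1)
      - hurwitzZetaDerivNegOne (z + 1) := by
  rw [logBarnesG]
  split_ifs with hle
  · rw [logBarnesG1p]
    push_cast
    ring
  · have hpos : 0 < z := by linarith
    rw [add_sub_cancel_right, logBarnesG1p, hurwitzZetaDerivNegOne_add_one hpos,
      Real.Gamma_add_one hpos.ne', Real.log_mul hpos.ne' (Real.Gamma_pos_of_pos hpos).ne']
    push_cast
    ring

theorem logBarnesG_one : logBarnesG 1 = 0 := by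
  simpa [hurwitzZetaDerivNegOne_one] using logBarnesG_add_one 0

theorem hasDerivAt_logBarnesG_add_one {z : ℝ} (hz : -1 < z) :
    HasDerivAt (fun z : ℝ => logBarnesG (z + 1))
      ((z * digamma (z + 1) - z - (1 - Real.log (2 * π)) / 2 : ℝ) : ℂ) z := by
  have hpole (m : ℕ) : z + 1 ≠ -m := by linarith [m.cast_nonneg (α := ℝ)]
  have hΓ := (hasDerivAt_id z).mul (HasDerivAt.comp_add_const z 1 (hasDerivAt_log_Gamma hpole))
  have hG := (hΓ.ofReal_comp.add_const (deriv riemannZeta (-1))).sub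
    (hasDerivAt_hurwitzZetaDerivNegOne_add_one hz)
  refine (hG.congr_deriv ?_).congr_of_eventuallyEq (.of_forall fun t => ?_)
  · simp only [id]
    push_cast
    ring
  · simpa using logBarnesG_add_one t

theorem neg_one_lt_of_mem_uIcc {x z : ℝ} (hz : -1 < z) (hx : x ∈ Set.uIcc 0 z) : -1 < x :=
  (lt_min neg_one_lt_zero hz).trans_le hx.1

theorem intervalIntegrable_mul_digamma_add_one {z : ℝ} (hz : -1 < z) :
    IntervalIntegrable (fun x => x * digamma (x + 1)) volume 0 z := by
  have hmono : MonotoneOn (fun x => digamma (x + 1)) (Set.uIcc 0 z) := fun x hx y hy hxy =>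
    monotoneOn_digamma (neg_lt_iff_pos_add.1 (neg_one_lt_of_mem_uIcc hz hx))
      (neg_lt_iff_pos_add.1 (neg_one_lt_of_mem_uIcc hz hy)) (by gcongr)
  exact hmono.intervalIntegrable.continuousOn_mul continuousOn_id

theorem integral_mul_digamma {z : ℝ} (hz : -1 < z) :
    ∫ x in 0..z, x * digamma x = ∫ x in 0..z, (x * digamma (x + 1) - 1) := by
  refine intervalIntegral.integral_congr_ae ?_
  filter_upwards [Measure.ae_ne volume 0] with x hx0 hx
  have hpole (m : ℕ) : x ≠ -m := by
    rcases m with _ | m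
    · simpa using hx0
    · have := neg_one_lt_of_mem_uIcc hz (Set.uIoc_subset_uIcc hx)
      push_cast
      linarith [m.cast_nonneg (α := ℝ)]
  rw [digamma_add_one hpole]
  field_simp
  ring

/-- log G(z+1) = z(1−z)/2 + (z/2) log(2π) + ∫₀^z x ψ(x) dx for z > −1. -/
theorem logBarnesG_eq_integral_digamma (z : ℝ) (hz : -1 < z) :
    logBarnesG (z + 1) =
      ((z * (1 - z) / 2 + z / 2 * Real.log (2 * π) : ℝ) : ℂ)
        + ((∫ x in (0 : ℝ)..z, x * digamma x : ℝ) : ℂ) := by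
  have hderiv : ∀ x ∈ Set.uIcc 0 z, HasDerivAt
      (fun x : ℝ => logBarnesG (x + 1) - ((x * (1 - x) / 2 + x / 2 * Real.log (2 * π) : ℝ) : ℂ))
      ((x * digamma (x + 1) - 1 : ℝ) : ℂ) x := fun x hx => by
    have hpoly := (((hasDerivAt_id x).mul ((hasDerivAt_id x).const_sub 1)).div_const 2).add
      (((hasDerivAt_id x).div_const 2).mul_const (Real.log (2 * π)))
    refine ((hasDerivAt_logBarnesG_add_one (neg_one_lt_of_mem_uIcc hz hx)).sub
      hpoly.ofReal_comp).congr_deriv ?_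
    simp only [id]
    push_cast
    ring
  have hint : IntervalIntegrable (fun x => x * digamma (x + 1) - 1) volume 0 z :=
    (intervalIntegrable_mul_digamma_add_one hz).sub intervalIntegrable_const
  have hftc := intervalIntegral.integral_eq_sub_of_hasDerivAt hderiv
    ⟨hint.1.ofReal, hint.2.ofReal⟩
  rw [integral_mul_digamma hz, ← intervalIntegral.integral_ofReal, hftc]
  simp [logBarnesG_one]
end

section
/- The logarithm of the Glaisher–Kinkelin constant admits the series representation log A = (log 2)/12 + (1/36) ∑_{k=1}^∞ (ζ(2k+1) − 1)·( 28 + 3/(1+k) − 6/(2+k) ), where ζ is the Riemann zeta function. -/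
open Real MeasureTheory Filter

open scoped Topology

/-!
Expanding `ζ(2k + 3) - 1 = ∑_{m ≥ 2} m ^ (-2k - 3)` and exchanging the order of summation, the
sums of `ζ(2k + 3) - 1` against `1`, `1 / (k + 2)` and `1 / (k + 3)` become sums over `m` of
elementary functions of `m` and `log (1 - 1 / m²)`. Abel summation of their partial sums leaves
harmonic numbers and the sums `∑ k log k`, so they evaluate to `1 / 4`, `log 2 - γ` and
`log 2 - 6 log A - γ / 2 + 7 / 6`; in the combination with coefficients `28`, `3`, `-6` the
constant `γ` cancels.

The limit that brings in `log A` comes from the Euler–Maclaurin approximants to `ζ(s)`. They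
converge locally uniformly on `re s > -2`, `s ≠ 1`, hence so do their derivatives, and at `s = -1`
these are explicit.
-/

/-! ### Euler–Maclaurin summation -/

/-- The Peano kernel, on an interval `[a, a + h]`, of the trapezoid rule with the first
Euler–Maclaurin correction, as a function of `u = x - a`. -/
noncomputable def trapezoidKernel (h u : ℝ) : ℝ := u * (u - h) * (2 * u - h) / 12

lemma abs_trapezoidKernel_le {h u : ℝ} (hu₀ : 0 ≤ u) (hu : u ≤ h) :
    |trapezoidKernel h u| ≤ h ^ 3 / 12 := by
  have hh : 0 ≤ h := hu₀.trans hu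
  have hu₁ : |u| ≤ h := by rwa [abs_of_nonneg hu₀]
  have hu₂ : |u - h| ≤ h := abs_le.2 ⟨by linarith, by linarith⟩
  have hu₃ : |2 * u - h| ≤ h := abs_le.2 ⟨by linarith, by linarith⟩
  calc |trapezoidKernel h u| = |u| * |u - h| * |2 * u - h| / 12 := by
        rw [trapezoidKernel, abs_div, abs_mul, abs_mul, abs_of_pos (by norm_num : (0 : ℝ) < 12)]
    _ ≤ h * h * h / 12 := by gcongr
    _ = h ^ 3 / 12 := by ring

lemma hasDerivAt_trapezoidKernel (h u : ℝ) :
    HasDerivAt (trapezoidKernel h) ((6 * u ^ 2 - 6 * h * u + h ^ 2) / 12) u := by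
  have hu := hasDerivAt_id' u
  refine ((hu.mul (hu.sub_const h)).mul ((hu.const_mul 2).sub_const h)).div_const 12
    |>.congr_deriv ?_
  simp only [Pi.mul_apply]
  ring

theorem norm_corrected_trapezoid_sub_le {E : Type*} [NormedAddCommGroup E] [NormedSpace ℝ E]
    {F f f' f'' f''' : ℝ → E} {a b C : ℝ} (hab : a ≤ b)
    (hF : ∀ x ∈ Set.Icc a b, HasDerivWithinAt F (f x) (Set.Icc a b) x)
    (hf : ∀ x ∈ Set.Icc a b, HasDerivWithinAt f (f' x) (Set.Icc a b) x)
    (hf' : ∀ x ∈ Set.Icc a b, HasDerivWithinAt f' (f'' x) (Set.Icc a b) x)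
    (hf'' : ∀ x ∈ Set.Icc a b, HasDerivWithinAt f'' (f''' x) (Set.Icc a b) x)
    (hC : ∀ x ∈ Set.Ico a b, ‖f''' x‖ ≤ C) :
    ‖((b - a) / 2) • (f a + f b) - ((b - a) ^ 2 / 12) • (f' b - f' a) - (F b - F a)‖ ≤
      C * (b - a) ^ 4 / 12 := by
  set h := b - a with hh
  let K : ℝ → ℝ := fun x ↦ trapezoidKernel h (x - a)
  let K' : ℝ → ℝ := fun x ↦ (6 * (x - a) ^ 2 - 6 * h * (x - a) + h ^ 2) / 12
  let K'' : ℝ → ℝ := fun x ↦ (2 * (x - a) - h) / 2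
  -- Since `K'''` is the constant `1`, all terms of the derivative cancel except `K • f'''`.
  let G : ℝ → E := fun x ↦ K x • f'' x - K' x • f' x + K'' x • f x - F x
  have hu (x : ℝ) : HasDerivAt (fun y ↦ y - a) 1 x := (hasDerivAt_id x).sub_const a
  have hK (x : ℝ) : HasDerivAt K (K' x) x := (hasDerivAt_trapezoidKernel h _).comp_sub_const x a
  have hK' (x : ℝ) : HasDerivAt K' (K'' x) x :=
    (((((hu x).pow 2).const_mul 6).sub ((hu x).const_mul (6 * h))).add_const (h ^ 2)
      |>.div_const 12).congr_deriv (by simp only [K'']; ring)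
  have hK'' (x : ℝ) : HasDerivAt K'' 1 x :=
    ((((hu x).const_mul 2).sub_const h).div_const 2).congr_deriv (by ring)
  have hG : ∀ x ∈ Set.Icc a b, HasDerivWithinAt G (K x • f''' x) (Set.Icc a b) x := fun x hx ↦
    (((((hK x).hasDerivWithinAt.smul (hf'' x hx)).sub
      ((hK' x).hasDerivWithinAt.smul (hf' x hx))).add
      ((hK'' x).hasDerivWithinAt.smul (hf x hx))).sub (hF x hx)).congr_deriv (by module)
  have hG' : ∀ x ∈ Set.Ico a b, ‖K x • f''' x‖ ≤ h ^ 3 / 12 * C := fun x hx ↦ by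
    rw [norm_smul]
    gcongr
    · exact abs_trapezoidKernel_le (by linarith [hx.1]) (by linarith [hx.2])
    · exact hC x hx
  have hGab : G b - G a =
      (h / 2) • (f a + f b) - (h ^ 2 / 12) • (f' b - f' a) - (F b - F a) := by
    simp only [G, K, K', K'', trapezoidKernel, ← hh]
    module
  calc _ = ‖G b - G a‖ := by rw [hGab]
    _ ≤ h ^ 3 / 12 * C * (b - a) :=
      norm_image_sub_le_of_norm_deriv_le_segment' hG hG' b (Set.right_mem_Icc.2 hab)
    _ = C * h ^ 4 / 12 := by rw [← hh]; ring

lemma hasDerivAt_ofReal_cpow {x : ℝ} (hx : x ≠ 0) (r : ℂ) :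
    HasDerivAt (fun y : ℝ ↦ (y : ℂ) ^ r) (r * (x : ℂ) ^ (r - 1)) x := by
  rcases eq_or_ne r 0 with rfl | hr
  · simpa using hasDerivAt_const x (1 : ℂ)
  · exact hasDerivAt_ofReal_cpow_const hx hr

lemma norm_corrected_trapezoid_cpow_sub_le {a b : ℝ} (ha : 0 < a) (hab : a ≤ b) {s : ℂ}
    (hs : s ≠ 1) (hre : -3 ≤ s.re) :
    ‖((b - a) / 2) * ((a : ℂ) ^ (-s) + (b : ℂ) ^ (-s)) -
        (b - a) ^ 2 / 12 * (-s * (b : ℂ) ^ (-s - 1) - -s * (a : ℂ) ^ (-s - 1)) -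
        ((b : ℂ) ^ (1 - s) / (1 - s) - (a : ℂ) ^ (1 - s) / (1 - s))‖ ≤
      ‖s * (s + 1) * (s + 2)‖ * a ^ (-s.re - 3) * (b - a) ^ 4 / 12 := by
  have hpos : ∀ x ∈ Set.Icc a b, x ≠ 0 := fun x hx ↦ (ha.trans_le hx.1).ne'
  have hF : ∀ x ∈ Set.Icc a b, HasDerivWithinAt (fun y : ℝ ↦ (y : ℂ) ^ (1 - s) / (1 - s))
      ((x : ℂ) ^ (-s)) (Set.Icc a b) x := fun x hx ↦ by
    have := hasDerivAt_ofReal_cpow_const' (hpos x hx) (r := -s) (by simpa using hs)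
    rw [neg_add_eq_sub] at this
    exact this.hasDerivWithinAt
  have hf : ∀ x ∈ Set.Icc a b, HasDerivWithinAt (fun y : ℝ ↦ (y : ℂ) ^ (-s))
      (-s * (x : ℂ) ^ (-s - 1)) (Set.Icc a b) x := fun x hx ↦
    (hasDerivAt_ofReal_cpow (hpos x hx) _).hasDerivWithinAt
  have hf' : ∀ x ∈ Set.Icc a b, HasDerivWithinAt (fun y : ℝ ↦ -s * (y : ℂ) ^ (-s - 1))
      (s * (s + 1) * (x : ℂ) ^ (-s - 2)) (Set.Icc a b) x := fun x hx ↦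
    (((hasDerivAt_ofReal_cpow (hpos x hx) _).const_mul (-s)).congr_deriv
      (by ring_nf)).hasDerivWithinAt
  have hf'' : ∀ x ∈ Set.Icc a b, HasDerivWithinAt
      (fun y : ℝ ↦ s * (s + 1) * (y : ℂ) ^ (-s - 2))
      (-(s * (s + 1) * (s + 2)) * (x : ℂ) ^ (-s - 3)) (Set.Icc a b) x := fun x hx ↦
    (((hasDerivAt_ofReal_cpow (hpos x hx) _).const_mul (s * (s + 1))).congr_deriv
      (by ring_nf)).hasDerivWithinAt
  have hbound : ∀ x ∈ Set.Ico a b, ‖-(s * (s + 1) * (s + 2)) * (x : ℂ) ^ (-s - 3)‖ ≤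
      ‖s * (s + 1) * (s + 2)‖ * a ^ (-s.re - 3) := fun x hx ↦ by
    rw [norm_mul, norm_neg, Complex.norm_cpow_eq_rpow_re_of_pos (ha.trans_le hx.1),
      show (-s - 3).re = -s.re - 3 by simp]
    gcongr ?_ * ?_
    exact Real.rpow_le_rpow_of_nonpos ha hx.1 (by linarith)
  simpa [Complex.real_smul, mul_add] using
    norm_corrected_trapezoid_sub_le hab hF hf hf' hf'' hbound

/-- The `N`-th Euler–Maclaurin approximant to `ζ(s)`, with the correction terms up to the one
in `B₂ = 1/6`. It is meant for `N ≥ 1`, where `(N : ℂ) ^ s` has no junk value. -/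
noncomputable def zetaApprox (N : ℕ) (s : ℂ) : ℂ :=
  ∑ n ∈ Finset.range N, 1 / ((n : ℂ) + 1) ^ s - (N : ℂ) ^ (1 - s) / (1 - s) - (N : ℂ) ^ (-s) / 2 +
    s * (N : ℂ) ^ (-s - 1) / 12

lemma norm_zetaApprox_succ_sub_le {N : ℕ} (hN : N ≠ 0) {s : ℂ} (hs : s ≠ 1) (hre : -3 ≤ s.re) :
    ‖zetaApprox (N + 1) s - zetaApprox N s‖ ≤
      ‖s * (s + 1) * (s + 2)‖ / 12 * (N : ℝ) ^ (-s.re - 3) := by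
  have key := norm_corrected_trapezoid_cpow_sub_le (a := N) (b := N + 1) (by positivity)
    (by linarith) hs hre
  rw [add_sub_cancel_left, one_pow, mul_one] at key
  calc _ = _ := by
        congr 1
        simp only [zetaApprox, Finset.sum_range_succ, Complex.cpow_neg _ s]
        push_cast
        ring
    _ ≤ _ := key
    _ = _ := by ring

lemma tendsto_natCast_succ_cpow_of_re_neg {r : ℂ} (hr : r.re < 0) :
    Tendsto (fun N : ℕ ↦ ((N + 1 : ℕ) : ℂ) ^ r) atTop (𝓝 0) := by
  rw [tendsto_zero_iff_norm_tendsto_zero]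
  have h := (tendsto_rpow_neg_atTop (neg_pos.2 hr)).comp tendsto_natCast_atTop_atTop
  rw [neg_neg] at h
  refine ((tendsto_add_atTop_iff_nat 1).2 h).congr fun N ↦ ?_
  exact (Complex.norm_natCast_cpow_of_pos N.succ_pos r).symm

lemma tendsto_zetaApprox_of_one_lt_re {s : ℂ} (hs : 1 < s.re) :
    Tendsto (fun N ↦ zetaApprox (N + 1) s) atTop (𝓝 (riemannZeta s)) := by
  have hsum : Summable fun n : ℕ ↦ 1 / ((n : ℂ) + 1) ^ s := by
    simpa using (summable_nat_add_iff 1).2 (Complex.summable_one_div_nat_cpow.2 hs)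
  have h₀ := (tendsto_add_atTop_iff_nat 1).2 hsum.hasSum.tendsto_sum_nat
  rw [← zeta_eq_tsum_one_div_nat_add_one_cpow hs] at h₀
  have h₁ := tendsto_natCast_succ_cpow_of_re_neg (r := 1 - s) (by simpa using hs)
  have h₂ := tendsto_natCast_succ_cpow_of_re_neg (r := -s) (by simp; linarith)
  have h₃ := tendsto_natCast_succ_cpow_of_re_neg (r := -s - 1) (by simp; linarith)
  simpa [zetaApprox] using (((h₀.sub (h₁.div_const (1 - s))).sub (h₂.div_const 2)).add
    ((h₃.const_mul s).div_const 12))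

lemma differentiableAt_zetaApprox_succ (N : ℕ) {s : ℂ} (hs : s ≠ 1) :
    DifferentiableAt ℂ (zetaApprox (N + 1)) s := by
  have hcpow (c : ℂ) (hc : c ≠ 0) {e : ℂ → ℂ} (he : DifferentiableAt ℂ e s) :
      DifferentiableAt ℂ (fun z ↦ c ^ e z) s := he.const_cpow (.inl hc)
  have hN : ((N + 1 : ℕ) : ℂ) ≠ 0 := by exact_mod_cast N.succ_ne_zero
  unfold zetaApprox
  refine (((DifferentiableAt.fun_sum fun n _ ↦ ?_).sub ?_).sub ?_).add ?_
  · have hn : (n : ℂ) + 1 ≠ 0 := by exact_mod_cast n.succ_ne_zero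
    exact (differentiableAt_const 1).div (hcpow _ hn (by fun_prop)) (by simp [hn])
  · exact (hcpow _ hN (by fun_prop)).div (by fun_prop) (sub_ne_zero.2 hs.symm)
  · exact (hcpow _ hN (by fun_prop)).div_const 2
  · exact (differentiableAt_id.mul (hcpow _ hN (by fun_prop))).div_const 12

lemma exists_tendstoLocallyUniformlyOn_of_summable {α F : Type*} [TopologicalSpace α]
    [LocallyCompactSpace α] [NormedAddCommGroup F] [CompleteSpace F] {f : ℕ → α → F} {U : Set α}
    (hU : IsOpen U)
    (hf : ∀ K ⊆ U, IsCompact K →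
      ∃ u : ℕ → ℝ, Summable u ∧ ∀ n, ∀ x ∈ K, ‖f (n + 1) x - f n x‖ ≤ u n) :
    ∃ g : α → F, TendstoLocallyUniformlyOn f g atTop U := by
  refine ⟨fun x ↦ ∑' n, (f (n + 1) x - f n x) + f 0 x,
    (tendstoLocallyUniformlyOn_iff_forall_isCompact hU).2 fun K hKU hK ↦ ?_⟩
  obtain ⟨u, hu, hfu⟩ := hf K hKU hK
  rw [Metric.tendstoUniformlyOn_iff]
  intro ε hε
  filter_upwards [Metric.tendstoUniformlyOn_iff.1 (tendstoUniformlyOn_tsum_nat hu hfu) ε hε]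
    with N hN x hx
  specialize hN x hx
  rwa [Finset.sum_range_sub (fun n ↦ f n x), dist_eq_norm, ← sub_add, sub_add_eq_add_sub,
    ← dist_eq_norm] at hN

lemma isOpen_setOf_lt_re_diff_singleton (a : ℝ) (c : ℂ) : IsOpen ({s : ℂ | a < s.re} \ {c}) :=
  (isOpen_lt continuous_const Complex.continuous_re).sdiff isClosed_singleton

lemma isPreconnected_setOf_lt_re_diff_singleton {a : ℝ} {c : ℂ} (hac : a < c.re) :
    IsPreconnected ({s : ℂ | a < s.re} \ {c}) := by
  have upper : Convex ℝ ({s : ℂ | a < s.re} ∩ {s | c.im < s.im}) :=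
    (convex_halfSpace_re_gt a).inter (convex_halfSpace_im_gt _)
  have lower : Convex ℝ ({s : ℂ | a < s.re} ∩ {s | s.im < c.im}) :=
    (convex_halfSpace_re_gt a).inter (convex_halfSpace_im_lt _)
  have right : Convex ℝ {s : ℂ | c.re < s.re} := convex_halfSpace_re_gt _
  have left : Convex ℝ ({s : ℂ | a < s.re} ∩ {s | s.re < c.re}) :=
    (convex_halfSpace_re_gt a).inter (convex_halfSpace_re_lt _)
  obtain ⟨m, ham, hmc⟩ := exists_between hac
  have h := ((upper.isPreconnected.union' ⟨⟨c.re + 1, c.im + 1⟩, by simp; linarith⟩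
    right.isPreconnected).union' (t := {s : ℂ | a < s.re} ∩ {s | s.im < c.im})
    ⟨⟨c.re + 1, c.im - 1⟩, by simp; linarith⟩ lower.isPreconnected).union'
    (t := {s : ℂ | a < s.re} ∩ {s | s.re < c.re})
    ⟨⟨m, c.im + 1⟩, by simp [ham, hmc]⟩ left.isPreconnected
  convert! h using 1
  ext s
  simp only [Set.mem_sdiff, Set.mem_ofPred_eq, Set.mem_singleton_iff, Set.mem_union,
    Set.mem_inter_iff, Complex.ext_iff]
  grind

lemma exists_summable_norm_zetaApprox_sub_le {K : Set ℂ} (hK : IsCompact K)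
    (hKU : K ⊆ {s : ℂ | -2 < s.re} \ {1}) :
    ∃ u : ℕ → ℝ, Summable u ∧
      ∀ N, ∀ s ∈ K, ‖zetaApprox (N + 1 + 1) s - zetaApprox (N + 1) s‖ ≤ u N := by
  rcases K.eq_empty_or_nonempty with rfl | hne
  · exact ⟨0, summable_zero, by simp⟩
  obtain ⟨s₀, hs₀, hmin⟩ := hK.exists_isMinOn hne Complex.continuous_re.continuousOn
  obtain ⟨C, hC⟩ := hK.exists_bound_of_continuousOn
    (f := fun s : ℂ ↦ s * (s + 1) * (s + 2)) (by fun_prop)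
  have hs₀re : -2 < s₀.re := (hKU hs₀).1
  refine ⟨fun N ↦ C / 12 * ((N + 1 : ℕ) : ℝ) ^ (-s₀.re - 3), Summable.mul_left _ ?_, ?_⟩
  · exact (summable_nat_add_iff 1).2 (Real.summable_nat_rpow.2 (by linarith))
  · intro N s hs
    have hre : s₀.re ≤ s.re := hmin hs
    refine (norm_zetaApprox_succ_sub_le N.succ_ne_zero (hKU hs).2 (by linarith)).trans ?_
    have hC₀ : 0 ≤ C := (norm_nonneg _).trans (hC s hs)
    beta_reduce
    gcongr ?_ / 12 * ?_
    · exact hC s hs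
    · exact Real.rpow_le_rpow_of_exponent_le (by simp) (by linarith)

theorem tendstoLocallyUniformlyOn_zetaApprox :
    TendstoLocallyUniformlyOn (fun N ↦ zetaApprox (N + 1)) riemannZeta atTop
      ({s : ℂ | -2 < s.re} \ {1}) := by
  set U : Set ℂ := {s : ℂ | -2 < s.re} \ {1}
  have hU : IsOpen U := isOpen_setOf_lt_re_diff_singleton _ _
  obtain ⟨g, hg⟩ := exists_tendstoLocallyUniformlyOn_of_summable
    (f := fun N ↦ zetaApprox (N + 1)) hU
    fun K hKU hK ↦ exists_summable_norm_zetaApprox_sub_le hK hKU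
  have hg_an : AnalyticOnNhd ℂ g U :=
    (hg.differentiableOn (.of_forall fun N s hs ↦
      (differentiableAt_zetaApprox_succ N hs.2).differentiableWithinAt) hU).analyticOnNhd hU
  have hζ_an : AnalyticOnNhd ℂ riemannZeta U :=
    DifferentiableOn.analyticOnNhd
      (fun s hs ↦ (differentiableAt_riemannZeta hs.2).differentiableWithinAt) hU
  have h2 : (2 : ℂ) ∈ U := by norm_num [U]
  have heq : g =ᶠ[𝓝 2] riemannZeta := by
    filter_upwards [hU.mem_nhds h2,
      (isOpen_lt continuous_const Complex.continuous_re).mem_nhds (by simp : 1 < (2 : ℂ).re)]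
      with s hsU hs
    exact tendsto_nhds_unique (hg.tendsto_at hsU) (tendsto_zetaApprox_of_one_lt_re hs)
  exact hg.congr_right (hg_an.eqOn_of_preconnected_of_eventuallyEq hζ_an
    (isPreconnected_setOf_lt_re_diff_singleton (by norm_num)) h2 heq)

/-! ### The Glaisher–Kinkelin limit -/

/-- The logarithm of `1¹ 2² ⋯ Nᴺ / (N ^ (N² / 2 + N / 2 + 1 / 12) * exp (-N² / 4))`, whose limit
is the classical definition of `log A`. -/
noncomputable def logGlaisherSeq (N : ℕ) : ℝ :=
  ∑ n ∈ Finset.range N, ((n : ℝ) + 1) * Real.log (n + 1) -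
    ((N : ℝ) ^ 2 / 2 + N / 2 + 1 / 12) * Real.log N + (N : ℝ) ^ 2 / 4

lemma hasDerivAt_natCast_cpow {n : ℕ} (hn : n ≠ 0) {e : ℂ → ℂ} {e' s : ℂ} (he : HasDerivAt e e' s) :
    HasDerivAt (fun z ↦ (n : ℂ) ^ e z) ((n : ℂ) ^ e s * Real.log n * e') s := by
  rw [Complex.natCast_log]
  exact he.const_cpow (.inl (by exact_mod_cast hn))

lemma hasDerivAt_zetaApprox_neg_one {N : ℕ} (hN : N ≠ 0) :
    HasDerivAt (zetaApprox N) (1 / 12 - logGlaisherSeq N) (-1) := by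
  have hneg : HasDerivAt (fun s : ℂ ↦ -s) (-1) (-1) := hasDerivAt_neg _
  have hone : HasDerivAt (fun s : ℂ ↦ 1 - s) (-1) (-1) := (hasDerivAt_id _).const_sub 1
  have hsum : HasDerivAt (fun s : ℂ ↦ ∑ n ∈ Finset.range N, 1 / ((n : ℂ) + 1) ^ s)
      (∑ n ∈ Finset.range N, -(((n : ℂ) + 1) * Real.log (n + 1))) (-1) := by
    refine HasDerivAt.fun_sum fun n _ ↦ ?_
    have := hasDerivAt_natCast_cpow n.succ_ne_zero hneg
    simpa [Complex.cpow_neg] using this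
  have hmain : HasDerivAt (fun s : ℂ ↦ (N : ℂ) ^ (1 - s) / (1 - s))
      (-((N : ℂ) ^ 2 / 2 * Real.log N) + (N : ℂ) ^ 2 / 4) (-1) := by
    refine ((hasDerivAt_natCast_cpow hN hone).div hone (by norm_num)).congr_deriv ?_
    rw [show (1 : ℂ) - -1 = (2 : ℕ) by norm_num, Complex.cpow_natCast]
    push_cast
    ring
  have hhalf : HasDerivAt (fun s : ℂ ↦ (N : ℂ) ^ (-s) / 2) (-(N * Real.log N) / 2) (-1) :=
    ((hasDerivAt_natCast_cpow hN hneg).div_const 2).congr_deriv (by simp)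
  have hcorr : HasDerivAt (fun s : ℂ ↦ s * (N : ℂ) ^ (-s - 1) / 12)
      ((1 + Real.log N) / 12) (-1) :=
    (((hasDerivAt_id (-1 : ℂ)).mul
      (hasDerivAt_natCast_cpow hN (hneg.sub_const 1))).div_const 12).congr_deriv (by simp)
  refine (((hsum.sub hmain).sub hhalf).add hcorr).congr_deriv ?_
  simp only [logGlaisherSeq, Finset.sum_neg_distrib]
  push_cast
  ring

lemma tendsto_ofReal_logGlaisherSeq :
    Tendsto (fun N ↦ (logGlaisherSeq (N + 1) : ℂ)) atTop (𝓝 logA) := by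
  have hderiv := (tendstoLocallyUniformlyOn_zetaApprox.deriv
    (.of_forall fun N s hs ↦ (differentiableAt_zetaApprox_succ N hs.2).differentiableWithinAt)
    (isOpen_setOf_lt_re_diff_singleton _ _)).tendsto_at (show (-1 : ℂ) ∈ _ by norm_num)
  refine (hderiv.const_sub (1 / 12)).congr fun N ↦ ?_
  simp [(hasDerivAt_zetaApprox_neg_one N.succ_ne_zero).deriv]

theorem tendsto_logGlaisherSeq : Tendsto logGlaisherSeq atTop (𝓝 logA.re) :=
  (tendsto_add_atTop_iff_nat 1).1
    ((Complex.continuous_re.tendsto _).comp tendsto_ofReal_logGlaisherSeq)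

lemma ofReal_re_logA : (logA.re : ℂ) = logA :=
  tendsto_nhds_unique ((Complex.continuous_ofReal.tendsto _).comp
    ((tendsto_add_atTop_iff_nat 1).2 tendsto_logGlaisherSeq)) tendsto_ofReal_logGlaisherSeq

/-! ### Sums of `ζ(2k + 3) - 1` -/

lemma hasSum_one_div_nat_add_two_pow {p : ℕ} (hp : 1 < p) :
    HasSum (fun n : ℕ ↦ 1 / ((n : ℂ) + 2) ^ p) (riemannZeta p - 1) := by
  have hsum : Summable fun n : ℕ ↦ 1 / (n : ℂ) ^ p :=
    Complex.summable_one_div_nat_cpow (p := p) |>.2 (by simpa using hp) |>.congr (by simp)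
  rw [zeta_nat_eq_tsum_of_gt_one hp]
  have h := (hasSum_nat_add_iff' 2).2 hsum.hasSum
  simpa [Finset.sum_range_succ, (zero_lt_one.trans hp).ne'] using h

theorem hasSum_riemannZeta_sub_one_mul {ι : Type*} {a : ι → ℝ} {p : ι → ℕ} {g : ℕ → ℝ} {S : ℝ}
    (ha : ∀ k, 0 ≤ a k) (hp : ∀ k, 1 < p k)
    (hg : ∀ n : ℕ, HasSum (fun k ↦ a k / ((n : ℝ) + 2) ^ p k) (g n))
    (hS : Tendsto (fun N ↦ ∑ n ∈ Finset.range N, g n) atTop (𝓝 S)) :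
    HasSum (fun k ↦ (riemannZeta (p k) - 1) * a k) S := by
  let c : ℕ × ι → ℝ := fun x ↦ a x.2 / ((x.1 : ℝ) + 2) ^ p x.2
  have hc : 0 ≤ c := fun x ↦ div_nonneg (ha _) (by positivity)
  have hgS : HasSum g S :=
    (hasSum_iff_tendsto_nat_of_nonneg (fun n ↦ (hg n).nonneg fun k ↦ hc (n, k)) S).2 hS
  have hcsum : Summable c := (summable_prod_of_nonneg hc).2
    ⟨fun n ↦ (hg n).summable, hgS.summable.congr fun n ↦ ((hg n).tsum_eq).symm⟩
  have hcS : HasSum c S := by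
    have := hcsum.hasSum
    rwa [(this.prod_fiberwise hg).unique hgS] at this
  have hswap : HasSum (fun x : ι × ℕ ↦ (c x.swap : ℂ)) S :=
    (Equiv.prodComm ι ℕ).hasSum_iff.2 (Complex.hasSum_ofReal.2 hcS)
  refine hswap.prod_fiberwise fun k ↦ ?_
  convert! (hasSum_one_div_nat_add_two_pow (hp k)).mul_right (a k : ℂ) using 1
  ext n
  simp [c, div_eq_inv_mul]

lemma abs_one_div_sq_lt_one {m : ℝ} (hm : 1 < m) : |1 / m ^ 2| < 1 := by
  rw [abs_of_nonneg (by positivity), div_lt_one (by positivity)]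
  exact one_lt_pow₀ hm two_ne_zero

lemma hasSum_one_div_pow_two_mul_add_three {m : ℝ} (hm : 1 < m) :
    HasSum (fun k : ℕ ↦ 1 / m ^ (2 * k + 3)) (1 / (m * (m ^ 2 - 1))) := by
  have hm₂ : m ^ 2 - 1 ≠ 0 := (sub_pos.2 (one_lt_pow₀ hm two_ne_zero)).ne'
  convert! (hasSum_geometric_of_abs_lt_one (abs_one_div_sq_lt_one hm)).mul_left (1 / m ^ 3) using 1
  · ext k
    rw [one_div_pow, ← pow_mul, pow_add]
    field_simp
  · field_simp

lemma hasSum_one_div_add_div_pow_two_mul_add_three {m : ℝ} (hm : 1 < m) (q : ℕ) :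
    HasSum (fun k : ℕ ↦ 1 / ((k : ℝ) + q + 2) / m ^ (2 * k + 3))
      (-m ^ (2 * q + 1) * (Real.log (1 - 1 / m ^ 2) +
        ∑ i ∈ Finset.range (q + 1), (1 / m ^ 2) ^ (i + 1) / ((i : ℝ) + 1))) := by
  have hlog := Real.hasSum_pow_div_log_of_abs_lt_one (abs_one_div_sq_lt_one hm)
  convert! ((hasSum_nat_add_iff' (q + 1)).2 hlog).mul_left (m ^ (2 * q + 1)) using 1
  · ext k
    rw [one_div_pow, ← pow_mul]
    push_cast
    field_simp
    ring
  · ring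

lemma log_one_sub_one_div_sq {m : ℝ} (hm : 1 < m) :
    Real.log (1 - 1 / m ^ 2) = Real.log (m - 1) - 2 * Real.log m + Real.log (m + 1) := by
  have hm₀ : m ≠ 0 := by positivity
  have hm₁ : m - 1 ≠ 0 := (sub_pos.2 hm).ne'
  have hm₂ : m + 1 ≠ 0 := by positivity
  rw [show 1 - 1 / m ^ 2 = (m - 1) * (m + 1) / m ^ 2 by field_simp; ring,
    Real.log_div (mul_ne_zero hm₁ hm₂) (pow_ne_zero 2 hm₀), Real.log_mul hm₁ hm₂, Real.log_pow]
  push_cast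
  ring

lemma log_one_add_one_div {x : ℝ} (hx : 0 < x) :
    Real.log (1 + 1 / x) = Real.log (x + 1) - Real.log x := by
  rw [← Real.log_div (by positivity) hx.ne', add_div, div_self hx.ne']

lemma tendsto_pow_mul_log_one_add_one_div_add_sum (n : ℕ) :
    Tendsto (fun x : ℝ ↦ x ^ n * (Real.log (1 + 1 / x) +
      ∑ i ∈ Finset.range n, (-(1 / x)) ^ (i + 1) / ((i : ℝ) + 1))) atTop (𝓝 0) := by
  have hbound : Tendsto (fun x : ℝ ↦ 1 / (x - 1)) atTop (𝓝 0) :=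
    (tendsto_const_nhds (x := (1 : ℝ))).div_atTop (tendsto_atTop_add_const_right _ (-1) tendsto_id)
  refine squeeze_zero_norm' ?_ hbound
  filter_upwards [eventually_gt_atTop 1] with x hx
  have hx₀ : 0 < x := zero_lt_one.trans hx
  have habs : |-(1 / x)| = 1 / x := by rw [abs_neg, abs_of_pos (by positivity)]
  have htaylor := Real.abs_log_sub_add_sum_range_le (x := -(1 / x))
    (by rwa [habs, div_lt_one hx₀]) n
  rw [sub_neg_eq_add, habs, add_comm] at htaylor
  rw [norm_mul, Real.norm_eq_abs, Real.norm_eq_abs, abs_of_pos (pow_pos hx₀ n)]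
  calc _ ≤ x ^ n * ((1 / x) ^ (n + 1) / (1 - 1 / x)) := by gcongr
    _ = 1 / (x - 1) := by
      have := (sub_pos.2 hx).ne'
      rw [one_div_pow, pow_succ]
      field_simp

lemma tendsto_natCast_succ_mul_log_sub_log :
    Tendsto (fun N : ℕ ↦ ((N : ℝ) + 1) * (Real.log (N + 2) - Real.log (N + 1))) atTop (𝓝 1) := by
  have h := ((tendsto_pow_mul_log_one_add_one_div_add_sum 1).add_const 1).comp
    (tendsto_atTop_add_const_right _ 1 tendsto_natCast_atTop_atTop)
  rw [zero_add] at h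
  refine h.congr fun N ↦ ?_
  have hN : (0 : ℝ) < N + 1 := by positivity
  rw [Function.comp_apply, log_one_add_one_div hN]
  simp only [Finset.sum_range_succ, Finset.sum_range_zero]
  push_cast
  field_simp
  ring_nf

lemma tendsto_natCast_succ_cube_mul_log_sub_log_sub :
    Tendsto (fun N : ℕ ↦ ((N : ℝ) + 1) ^ 3 * (Real.log (N + 2) - Real.log (N + 1)) -
      ((N : ℝ) + 1) ^ 2 + ((N : ℝ) + 1) / 2) atTop (𝓝 (1 / 3)) := by
  have h := ((tendsto_pow_mul_log_one_add_one_div_add_sum 3).add_const (1 / 3)).comp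
    (tendsto_atTop_add_const_right _ 1 tendsto_natCast_atTop_atTop)
  rw [zero_add] at h
  refine h.congr fun N ↦ ?_
  have hN : (0 : ℝ) < N + 1 := by positivity
  rw [Function.comp_apply, log_one_add_one_div hN]
  simp only [Finset.sum_range_succ, Finset.sum_range_zero]
  push_cast
  field_simp
  ring_nf

lemma tendsto_harmonic_succ_sub_log :
    Tendsto (fun N : ℕ ↦ (harmonic (N + 1) : ℝ) - Real.log (N + 1)) atTop
      (𝓝 Real.eulerMascheroniConstant) := by
  simpa using (tendsto_add_atTop_iff_nat 1).2 Real.tendsto_harmonic_sub_log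

lemma sum_range_one_div_mul_sq_sub_one (N : ℕ) :
    ∑ n ∈ Finset.range N, 1 / (((n : ℝ) + 2) * (((n : ℝ) + 2) ^ 2 - 1)) =
      1 / 4 - 1 / (2 * (((N : ℝ) + 1) * (N + 2))) := by
  induction N with
  | zero => norm_num
  | succ N ih =>
    have : ((N : ℝ) + 2) ^ 2 - 1 = (N + 1) * (N + 3) := by ring
    rw [Finset.sum_range_succ, ih, this]
    push_cast
    field_simp
    ring

lemma sum_range_mul_log_one_sub_one_div_sq (N : ℕ) :
    ∑ n ∈ Finset.range N,
        -((n : ℝ) + 2) * (Real.log (1 - 1 / ((n : ℝ) + 2) ^ 2) + 1 / ((n : ℝ) + 2) ^ 2) =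
      Real.log 2 - ((N : ℝ) + 1) * (Real.log (N + 2) - Real.log (N + 1)) -
        (harmonic (N + 1) - Real.log (N + 1)) + 1 := by
  induction N with
  | zero => simp
  | succ N ih =>
    rw [Finset.sum_range_succ, ih, log_one_sub_one_div_sq (by linarith [N.cast_nonneg (α := ℝ)]),
      harmonic_succ (N + 1)]
    push_cast
    rw [show (N : ℝ) + 2 - 1 = N + 1 by ring, show (N : ℝ) + 1 + 1 = N + 2 by ring,
      show (N : ℝ) + 1 + 2 = N + 3 by ring, show (N : ℝ) + 2 + 1 = N + 3 by ring]
    field_simp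
    ring

lemma sum_range_cube_mul_log_one_sub_one_div_sq (N : ℕ) :
    ∑ n ∈ Finset.range N, -((n : ℝ) + 2) ^ 3 * (Real.log (1 - 1 / ((n : ℝ) + 2) ^ 2) +
        1 / ((n : ℝ) + 2) ^ 2 + (1 / ((n : ℝ) + 2) ^ 2) ^ 2 / 2) =
      Real.log 2 - 6 * logGlaisherSeq (N + 1) -
        (((N : ℝ) + 1) ^ 3 * (Real.log (N + 2) - Real.log (N + 1)) -
          ((N : ℝ) + 1) ^ 2 + ((N : ℝ) + 1) / 2) -
        (harmonic (N + 1) - Real.log (N + 1)) / 2 + 3 / 2 := by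
  induction N with
  | zero => simp [logGlaisherSeq]; ring
  | succ N ih =>
    rw [Finset.sum_range_succ, ih, log_one_sub_one_div_sq (by linarith [N.cast_nonneg (α := ℝ)]),
      harmonic_succ (N + 1)]
    simp only [logGlaisherSeq, Finset.sum_range_succ _ (N + 1)]
    push_cast
    rw [show (N : ℝ) + 2 - 1 = N + 1 by ring, show (N : ℝ) + 1 + 1 = N + 2 by ring,
      show (N : ℝ) + 1 + 2 = N + 3 by ring, show (N : ℝ) + 2 + 1 = N + 3 by ring]
    field_simp
    ring

theorem hasSum_riemannZeta_odd_sub_one :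
    HasSum (fun k : ℕ ↦ riemannZeta (2 * k + 3 : ℕ) - 1) (1 / 4) := by
  have hlim : Tendsto (fun N : ℕ ↦ 1 / 4 - 1 / (2 * (((N : ℝ) + 1) * (N + 2)))) atTop
      (𝓝 (1 / 4)) := by
    have hcast := tendsto_natCast_atTop_atTop (R := ℝ)
    have hdenom := ((tendsto_atTop_add_const_right _ 1 hcast).atTop_mul_atTop₀
      (tendsto_atTop_add_const_right _ 2 hcast)).const_mul_atTop (zero_lt_two' ℝ)
    simpa only [sub_zero] using
      ((tendsto_const_nhds (x := (1 : ℝ))).div_atTop hdenom).const_sub (1 / 4)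
  have := hasSum_riemannZeta_sub_one_mul (a := fun _ : ℕ ↦ 1) (p := fun k ↦ 2 * k + 3)
    (fun _ ↦ zero_le_one) (fun _ ↦ by omega)
    (fun n ↦ hasSum_one_div_pow_two_mul_add_three (by linarith [n.cast_nonneg (α := ℝ)]))
    (hlim.congr fun N ↦ (sum_range_one_div_mul_sq_sub_one N).symm)
  simpa using this

theorem hasSum_riemannZeta_odd_sub_one_mul_one_div_add_two :
    HasSum (fun k : ℕ ↦ (riemannZeta (2 * k + 3 : ℕ) - 1) * (1 / ((k : ℝ) + 2) : ℝ))
      (Real.log 2 - Real.eulerMascheroniConstant : ℝ) := by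
  refine hasSum_riemannZeta_sub_one_mul (fun k ↦ by positivity) (fun _ ↦ by omega)
    (fun n ↦ ?_) ?_ (g := fun n ↦
      -((n : ℝ) + 2) * (Real.log (1 - 1 / ((n : ℝ) + 2) ^ 2) + 1 / ((n : ℝ) + 2) ^ 2))
  · simpa using hasSum_one_div_add_div_pow_two_mul_add_three (m := n + 2)
      (by linarith [n.cast_nonneg (α := ℝ)]) 0
  · simp only [sum_range_mul_log_one_sub_one_div_sq]
    convert! ((tendsto_natCast_succ_mul_log_sub_log.const_sub (Real.log 2)).sub
      tendsto_harmonic_succ_sub_log).add_const 1 using 2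
    ring

theorem hasSum_riemannZeta_odd_sub_one_mul_one_div_add_three :
    HasSum (fun k : ℕ ↦ (riemannZeta (2 * k + 3 : ℕ) - 1) * (1 / ((k : ℝ) + 3) : ℝ))
      (Real.log 2 - 6 * logA.re - Real.eulerMascheroniConstant / 2 + 7 / 6 : ℝ) := by
  refine hasSum_riemannZeta_sub_one_mul (fun k ↦ by positivity) (fun _ ↦ by omega)
    (fun n ↦ ?_) ?_ (g := fun n ↦ -((n : ℝ) + 2) ^ 3 * (Real.log (1 - 1 / ((n : ℝ) + 2) ^ 2) +
        1 / ((n : ℝ) + 2) ^ 2 + (1 / ((n : ℝ) + 2) ^ 2) ^ 2 / 2))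
  · convert! hasSum_one_div_add_div_pow_two_mul_add_three (m := n + 2)
      (by linarith [n.cast_nonneg (α := ℝ)]) 1 using 1
    · ext k
      push_cast
      ring
    · simp only [Finset.sum_range_succ, Finset.sum_range_zero]
      push_cast
      ring
  · simp only [sum_range_cube_mul_log_one_sub_one_div_sq]
    convert! ((((((tendsto_add_atTop_iff_nat 1).2 tendsto_logGlaisherSeq).const_mul 6).const_sub
      (Real.log 2)).sub tendsto_natCast_succ_cube_mul_log_sub_log_sub).sub
      (tendsto_harmonic_succ_sub_log.div_const 2)).add_const (3 / 2) using 2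
    ring

/-- Series representation of log A in terms of ζ(2k+1), k ≥ 1. -/
theorem logA_eq_series :
    logA = (Real.log 2) / 12 + (1 / 36) * ∑' k : ℕ,
      (riemannZeta (2 * ((k : ℂ) + 1) + 1) - 1)
        * (28 + 3 / ((k : ℂ) + 2) - 6 / ((k : ℂ) + 3)) := by
  have hsum := ((hasSum_riemannZeta_odd_sub_one.mul_left 28).add
    (hasSum_riemannZeta_odd_sub_one_mul_one_div_add_two.mul_left 3)).sub
    (hasSum_riemannZeta_odd_sub_one_mul_one_div_add_three.mul_left 6)
  have hterm (k : ℕ) : (riemannZeta (2 * ((k : ℂ) + 1) + 1) - 1) *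
      (28 + 3 / ((k : ℂ) + 2) - 6 / ((k : ℂ) + 3)) =
      28 * (riemannZeta (2 * k + 3 : ℕ) - 1) +
        3 * ((riemannZeta (2 * k + 3 : ℕ) - 1) * (1 / ((k : ℝ) + 2) : ℝ)) -
        6 * ((riemannZeta (2 * k + 3 : ℕ) - 1) * (1 / ((k : ℝ) + 3) : ℝ)) := by
    rw [show 2 * ((k : ℂ) + 1) + 1 = (2 * k + 3 : ℕ) by push_cast; ring]
    push_cast
    ring
  rw [tsum_congr hterm, hsum.tsum_eq]
  push_cast
  rw [ofReal_re_logA]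
  ring
end
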